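/- arXiv:2507.06225 — 6 statements merged into one kernel-verified Lean document; each statement's English description precedes it below -/
import Mathlib

section
/- Let M be a matroid of rank r ≥ 1 on an n-element ground set E(M). There exists an element e ∈ E(M) contained in no nonbasis of M (i.e., every r-element subset of E(M) containing e is a basis of M) if and only if M is a free extension N + e' of a paving matroid N of rank r, or M is isomorphic to the direct sum U(1,1) ⊕ U(r−1, n−1). -/
open scoped BigOperators TensorProduct

namespace MatroidGame

/-- A "pre-matroid": a finite ground set together with a distinguished collection of
finsets (intended to be the bases). -/
structure PreMatroid (α : Type*) where
  E : Finset α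
  bases : Finset (Finset α)

namespace PreMatroid

variable {α : Type*} [DecidableEq α]

/-- The paper's definition of a matroid: a nonempty collection of `r`-element subsets of the
ground set satisfying the basis exchange axiom. -/
def IsMatroid (M : PreMatroid α) : Prop :=
  M.bases.Nonempty ∧
    (∀ B ∈ M.bases, B ⊆ M.E) ∧
    (∀ B₁ ∈ M.bases, ∀ B₂ ∈ M.bases, B₁.card = B₂.card) ∧
    (∀ B₁ ∈ M.bases, ∀ B₂ ∈ M.bases, ∀ a ∈ B₁ \ B₂,
      ∃ b ∈ B₂ \ B₁, insert b (B₁.erase a) ∈ M.bases)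

/-- A set is independent if it is contained in a basis. -/
def Indep (M : PreMatroid α) (I : Finset α) : Prop :=
  ∃ B ∈ M.bases, I ⊆ B

instance (M : PreMatroid α) : DecidablePred M.Indep := fun I =>
  inferInstanceAs (Decidable (∃ B ∈ M.bases, I ⊆ B))

/-- The rank of a subset: the maximal size of an independent subset of it. -/
def rkSet (M : PreMatroid α) (X : Finset α) : ℕ :=
  (X.powerset.filter fun I => M.Indep I).sup Finset.card

/-- The rank of the matroid. -/
def rk (M : PreMatroid α) : ℕ := M.rkSet M.E

/-- A circuit is a minimal dependent subset of the ground set. -/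
def Circuit (M : PreMatroid α) (C : Finset α) : Prop :=
  C ⊆ M.E ∧ ¬M.Indep C ∧ ∀ D ⊂ C, M.Indep D

/-- A matroid is paving if every circuit has size at least the rank. -/
def Paving (M : PreMatroid α) : Prop := ∀ C, M.Circuit C → M.rk ≤ C.card

/-- The dual matroid: bases are complements of bases. -/
def dual (M : PreMatroid α) : PreMatroid α := ⟨M.E, M.bases.image fun B => M.E \ B⟩

/-- A matroid is sparse paving if both it and its dual are paving. -/
def SparsePaving (M : PreMatroid α) : Prop := M.Paving ∧ M.dual.Paving

/-- The closure of a set. -/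
def cl (M : PreMatroid α) (X : Finset α) : Finset α :=
  M.E.filter fun b => M.rkSet (insert b X) = M.rkSet X

/-- A flat is a closed subset. -/
def IsFlat (M : PreMatroid α) (F : Finset α) : Prop := F ⊆ M.E ∧ M.cl F = F

/-- A hyperplane is a flat of rank `rk M - 1`. -/
def IsHyperplane (M : PreMatroid α) (H : Finset α) : Prop :=
  M.IsFlat H ∧ M.rkSet H = M.rk - 1

/-- A cyclic hyperplane is a hyperplane which is a union of circuits. -/
def IsCyclicHyperplane (M : PreMatroid α) (H : Finset α) : Prop :=
  M.IsHyperplane H ∧ ∀ x ∈ H, ∃ C, M.Circuit C ∧ C ⊆ H ∧ x ∈ C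

/-- A loop is a ground set element contained in no basis. -/
def IsLoop (M : PreMatroid α) (a : α) : Prop := a ∈ M.E ∧ ∀ B ∈ M.bases, a ∉ B

/-- A coloop is a ground set element contained in every basis. -/
def IsColoop (M : PreMatroid α) (a : α) : Prop := a ∈ M.E ∧ ∀ B ∈ M.bases, a ∈ B

def Loopless (M : PreMatroid α) : Prop := ∀ a, ¬M.IsLoop a

/-- A matroid is simple if it has no loops and every rank-1 subset is a singleton. -/
def Simple (M : PreMatroid α) : Prop :=
  M.Loopless ∧ ∀ X ⊆ M.E, M.rkSet X = 1 → X.card = 1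

/-- The restriction `M | Y`: its independent sets are the independent sets of `M` contained
in `Y`, and its bases are the maximal such sets. -/
def restrict (M : PreMatroid α) (Y : Finset α) : PreMatroid α :=
  ⟨Y, Y.powerset.filter fun B =>
      M.Indep B ∧ ∀ I ∈ Y.powerset, M.Indep I → B ⊆ I → I = B⟩

/-- `M` is the free extension of `N` by the new element `e`. -/
def IsFreeExtension (M N : PreMatroid α) (e : α) : Prop :=
  e ∉ N.E ∧ M.E = insert e N.E ∧
    ∀ B : Finset α, B ∈ M.bases ↔
      (B ∈ N.bases ∨ ∃ A : Finset α, N.Indep A ∧ A.card = N.rk - 1 ∧ B = insert e A)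

/-- The uniform matroid of rank `k` on the ground set `E`. -/
def uniform {β : Type*} (E : Finset β) (k : ℕ) : PreMatroid β := ⟨E, E.powersetCard k⟩

/-- The direct sum of two matroids. -/
def directSum {β γ : Type*} [DecidableEq β] [DecidableEq γ] (M : PreMatroid β)
    (N : PreMatroid γ) : PreMatroid (β ⊕ γ) :=
  ⟨M.E.map ⟨Sum.inl, Sum.inl_injective⟩ ∪ N.E.map ⟨Sum.inr, Sum.inr_injective⟩,
    (M.bases ×ˢ N.bases).image fun p =>
      p.1.map ⟨Sum.inl, Sum.inl_injective⟩ ∪ p.2.map ⟨Sum.inr, Sum.inr_injective⟩⟩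

/-- `φ` realizes an isomorphism of matroids: it is a bijection of the ground sets such that a
subset of the ground set is a basis iff its image is a basis. -/
def IsIsoMap {β γ : Type*} [DecidableEq γ] (M : PreMatroid β) (N : PreMatroid γ)
    (φ : β → γ) : Prop :=
  Set.BijOn φ ↑M.E ↑N.E ∧ ∀ B ⊆ M.E, (B ∈ M.bases ↔ B.image φ ∈ N.bases)

/-- Two matroids are isomorphic. -/
def Iso {β γ : Type*} [DecidableEq γ] (M : PreMatroid β) (N : PreMatroid γ) : Prop :=
  ∃ φ : β → γ, M.IsIsoMap N φ

end PreMatroid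

/-- The pointed sets `S•`: pairs `(A, p)` with `A ∈ S` and `p ∈ A`. -/
abbrev PtSet {α : Type*} (S : Finset (Finset α)) : Type _ :=
  {v : Finset α × α // v.1 ∈ S ∧ v.2 ∈ v.1}

/-- The relation `rel` on pointed sets, valued in `{0,1,2,3}`. -/
def relNum {α : Type*} [DecidableEq α] (a b : Finset α × α) : ℕ :=
  if a.1 = b.1 then (if a.2 = b.2 then 0 else 2) else (if a.2 = b.2 then 1 else 3)

/-- `S` covers the ground set `E` if every element of `E` lies in a member of `S`. -/
def Covers {α : Type*} (S : Finset (Finset α)) (E : Finset α) : Prop :=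
  ∀ a ∈ E, ∃ A ∈ S, a ∈ A

noncomputable section

/-- The defining relations of the quantum isomorphism (magic unitary) algebra `𝔖(I,J)`. -/
inductive MagicRel (I J : Type*) [Fintype I] [Fintype J] :
    FreeAlgebra ℂ (I × J) → FreeAlgebra ℂ (I × J) → Prop
  | idem (a : I) (x : J) :
      MagicRel I J (FreeAlgebra.ι ℂ (a, x) * FreeAlgebra.ι ℂ (a, x)) (FreeAlgebra.ι ℂ (a, x))
  | row (a : I) {x y : J} (h : x ≠ y) :
      MagicRel I J (FreeAlgebra.ι ℂ (a, x) * FreeAlgebra.ι ℂ (a, y)) 0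
  | col {a b : I} (x : J) (h : a ≠ b) :
      MagicRel I J (FreeAlgebra.ι ℂ (a, x) * FreeAlgebra.ι ℂ (b, x)) 0
  | rowSum (a : I) : MagicRel I J (∑ x : J, FreeAlgebra.ι ℂ (a, x)) 1
  | colSum (x : J) : MagicRel I J (∑ a : I, FreeAlgebra.ι ℂ (a, x)) 1

/-- The quantum isomorphism algebra `𝔖(I,J)`. -/
abbrev MagicAlgebra (I J : Type*) [Fintype I] [Fintype J] := RingQuot (MagicRel I J)

/-- The generator `u_{a x}` of `𝔖(I,J)`. -/
def magicGen (I J : Type*) [Fintype I] [Fintype J] (a : I) (x : J) : MagicAlgebra I J :=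
  RingQuot.mkAlgHom ℂ (MagicRel I J) (FreeAlgebra.ι ℂ (a, x))

/-- The defining relations of the isomorphism algebra: magic unitary relations together with
`u_{a x} u_{b y} = 0` whenever `rel(a,b) ≠ rel(x,y)`. -/
inductive IsoRel (I J : Type*) [Fintype I] [Fintype J] (rI : I → I → ℕ) (rJ : J → J → ℕ) :
    FreeAlgebra ℂ (I × J) → FreeAlgebra ℂ (I × J) → Prop
  | magic {u v : FreeAlgebra ℂ (I × J)} : MagicRel I J u v → IsoRel I J rI rJ u v
  | mismatch (a b : I) (x y : J) (h : rI a b ≠ rJ x y) :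
      IsoRel I J rI rJ (FreeAlgebra.ι ℂ (a, x) * FreeAlgebra.ι ℂ (b, y)) 0

/-- The generic isomorphism algebra for two relation-valued structures. -/
abbrev IsoAlgebra (I J : Type*) [Fintype I] [Fintype J] (rI : I → I → ℕ)
    (rJ : J → J → ℕ) :=
  RingQuot (IsoRel I J rI rJ)

/-- The generator `u_{a x}` of the isomorphism algebra. -/
def isoGen (I J : Type*) [Fintype I] [Fintype J] (rI : I → I → ℕ) (rJ : J → J → ℕ)
    (a : I) (x : J) : IsoAlgebra I J rI rJ :=
  RingQuot.mkAlgHom ℂ (IsoRel I J rI rJ) (FreeAlgebra.ι ℂ (a, x))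

/-- `rel` as a function on pointed sets. -/
abbrev ptRel {α : Type*} [DecidableEq α] (S : Finset (Finset α)) : PtSet S → PtSet S → ℕ :=
  fun a b => relNum a.val b.val

/-- The isomorphism `∗`-algebra `𝔄•(M,N,S)` associated to the matroid isomorphism game,
presented by magic unitary relations on pointed sets plus the `rel` mismatch relations. -/
abbrev MatIsoAlgebra {α β : Type*} [Fintype α] [Fintype β] [DecidableEq α] [DecidableEq β]
    (S_M : Finset (Finset α)) (S_N : Finset (Finset β)) :=
  IsoAlgebra (PtSet S_M) (PtSet S_N) (ptRel S_M) (ptRel S_N)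

/-- The generator `u_{𝔞 𝔵}` of `𝔄•(M,N,S)`. -/
def matGen {α β : Type*} [Fintype α] [Fintype β] [DecidableEq α] [DecidableEq β]
    (S_M : Finset (Finset α)) (S_N : Finset (Finset β)) (a : PtSet S_M) (x : PtSet S_N) :
    MatIsoAlgebra S_M S_N :=
  isoGen (PtSet S_M) (PtSet S_N) (ptRel S_M) (ptRel S_N) a x

end


open PreMatroid

/-!
The dichotomy is whether the element `e` avoiding all nonbases is a coloop. If it is, the bases of
`M` are exactly the `r`-element subsets of the ground set containing `e`, which are the bases of
`U(1,1) ⊕ U(r-1,n-1)`. If it is not, fix a basis `B₀` avoiding `e`. For every `(r-1)`-element set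
`A` avoiding `e`, the set `A ∪ {e}` is a basis, and exchanging `e` for an element of `B₀` gives a
basis of `M \ e` containing `A`. Hence every `(r-1)`-element subset of `M \ e` is independent,
which says both that `M \ e` is paving and that `M` is its free extension by `e`.
-/

theorem exists_bijOn_univ_apply_eq {α β : Type*} [Fintype β] {s : Finset α} {e : α} (he : e ∈ s)
    (b : β) (hcard : Fintype.card β = s.card) :
    ∃ φ : α → β, Set.BijOn φ s Set.univ ∧ φ e = b := by
  classical
  obtain ⟨g, hg⟩ := Finset.exists_equiv_extend_of_card_eq hcard (s := {b}) (f := fun _ => e)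
    (by simpa using he) (by simp)
  have hgb : (g b : α) = e := hg b (Finset.mem_singleton_self b)
  have hbij : Set.BijOn (fun x => (g x : α)) Set.univ s :=
    ⟨fun x _ => (g x).2, (Subtype.val_injective.comp g.injective).injOn,
      fun x hx => ⟨g.symm ⟨x, hx⟩, trivial, by simp⟩⟩
  have : Nonempty β := ⟨b⟩
  have hinv := hbij.invOn_invFunOn
  refine ⟨Function.invFunOn (fun x => (g x : α)) Set.univ, hbij.symm hinv.symm, ?_⟩
  rw [← hgb]
  exact hinv.1 (Set.mem_univ b)

namespace PreMatroid

section Bases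

variable {α : Type*} {M N : PreMatroid α} {A B C I : Finset α} {e : α}

theorem exists_circuit_subset (hC : C ⊆ M.E) (hdep : ¬M.Indep C) : ∃ D ⊆ C, M.Circuit D := by
  obtain ⟨D, hDC, hD⟩ := exists_minimal_le_of_wellFoundedLT (fun D => ¬M.Indep D) C hdep
  exact ⟨D, hDC, hDC.trans hC, hD.prop, fun D' hD' => not_not.1 (hD.not_prop_of_lt hD')⟩

variable [DecidableEq α]

theorem IsMatroid.card_eq_rk (hM : M.IsMatroid) (hB : B ∈ M.bases) : B.card = M.rk := by
  obtain ⟨-, hground, hcard, -⟩ := hM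
  apply le_antisymm
  · exact Finset.le_sup (f := Finset.card) <|
      Finset.mem_filter.2 ⟨Finset.mem_powerset.2 (hground B hB), B, hB, subset_rfl⟩
  · refine Finset.sup_le fun I hI => ?_
    obtain ⟨-, B', hB', hIB'⟩ := Finset.mem_filter.1 hI
    exact (Finset.card_le_card hIB').trans_eq (hcard B' hB' B hB)

theorem IsMatroid.subset_ground (hM : M.IsMatroid) (hI : M.Indep I) : I ⊆ M.E := by
  obtain ⟨B, hB, hIB⟩ := hI
  exact hIB.trans (hM.2.1 B hB)

theorem IsMatroid.rk_le_card_ground (hM : M.IsMatroid) : M.rk ≤ M.E.card := by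
  obtain ⟨B, hB⟩ := hM.1
  exact (hM.card_eq_rk hB).symm.trans_le (Finset.card_le_card (hM.2.1 B hB))

theorem IsMatroid.exists_basis_notMem (hM : M.IsMatroid) (he : ¬M.IsColoop e) :
    ∃ B ∈ M.bases, e ∉ B := by
  by_contra! hall
  obtain ⟨B, hB⟩ := hM.1
  exact he ⟨hM.2.1 B hB (hall B hB), hall⟩

theorem Paving.indep_of_card_lt_rk (hM : M.Paving) (hA : A ⊆ M.E) (hcard : A.card < M.rk) :
    M.Indep A := by
  by_contra hdep
  obtain ⟨C, hCA, hC⟩ := exists_circuit_subset hA hdep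
  exact (hM C hC).not_gt ((Finset.card_le_card hCA).trans_lt hcard)

theorem IsMatroid.paving_of_forall_indep (hM : M.IsMatroid)
    (hindep : ∀ A ⊆ M.E, A.card + 1 = M.rk → M.Indep A) : M.Paving := by
  rintro C ⟨hC, hdep, -⟩
  by_contra! hlt
  have hrk := hM.rk_le_card_ground
  obtain ⟨A, hCA, hA, hcard⟩ :=
    Finset.exists_subsuperset_card_eq (n := M.rk - 1) hC (by lia) (by lia)
  obtain ⟨B, hB, hAB⟩ := hindep A hA (by lia)
  exact hdep ⟨B, hB, hCA.trans hAB⟩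

/-- The deletion `M \ e`, used to recover `N` from a free extension `M = N + e`. Its bases are
taken to be the bases of `M` avoiding `e`, which is the usual deletion only when `e` is not a
coloop: for a coloop the collection is empty. -/
def delete (M : PreMatroid α) (e : α) : PreMatroid α :=
  ⟨M.E.erase e, M.bases.filter fun B => e ∉ B⟩

theorem mem_bases_delete : B ∈ (M.delete e).bases ↔ B ∈ M.bases ∧ e ∉ B :=
  Finset.mem_filter

theorem notMem_of_subset_ground_delete (hA : A ⊆ (M.delete e).E) : e ∉ A :=
  fun he => Finset.notMem_erase e M.E (hA he)

theorem IsMatroid.delete (hM : M.IsMatroid) (he : ¬M.IsColoop e) : (M.delete e).IsMatroid := by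
  obtain ⟨B₀, hB₀, heB₀⟩ := hM.exists_basis_notMem he
  obtain ⟨-, hground, hcard, hexchange⟩ := hM
  simp only [IsMatroid, mem_bases_delete]
  refine ⟨⟨B₀, mem_bases_delete.2 ⟨hB₀, heB₀⟩⟩,
    fun B hB => Finset.subset_erase.2 ⟨hground B hB.1, hB.2⟩,
    fun B₁ hB₁ B₂ hB₂ => hcard B₁ hB₁.1 B₂ hB₂.1, fun B₁ hB₁ B₂ hB₂ a ha => ?_⟩
  obtain ⟨b, hb, hbasis⟩ := hexchange B₁ hB₁.1 B₂ hB₂.1 a ha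
  have heb : e ≠ b := fun h => hB₂.2 (h ▸ (Finset.mem_sdiff.1 hb).1)
  exact ⟨b, hb, hbasis, by simp [heb, hB₁.2]⟩

theorem IsMatroid.rk_delete (hM : M.IsMatroid) (he : ¬M.IsColoop e) :
    (M.delete e).rk = M.rk := by
  obtain ⟨B, hB⟩ := (hM.delete he).1
  rw [← (hM.delete he).card_eq_rk hB, hM.card_eq_rk (mem_bases_delete.1 hB).1]

/-- The ground set element `e` lies in no nonbasis of `M`, the property to be characterized. -/
def AvoidsNonbases (M : PreMatroid α) (e : α) : Prop :=
  e ∈ M.E ∧ ∀ B ⊆ M.E, B.card = M.rk → e ∈ B → B ∈ M.bases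

theorem AvoidsNonbases.insert_mem_bases (he : M.AvoidsNonbases e) (hA : A ⊆ (M.delete e).E)
    (hcard : A.card + 1 = M.rk) : insert e A ∈ M.bases := by
  refine he.2 _ (Finset.insert_subset he.1 (hA.trans (Finset.erase_subset e M.E))) ?_
    (Finset.mem_insert_self e A)
  rw [Finset.card_insert_of_notMem (notMem_of_subset_ground_delete hA), hcard]

theorem AvoidsNonbases.indep_delete (he : M.AvoidsNonbases e) (hM : M.IsMatroid)
    (hcol : ¬M.IsColoop e) (hA : A ⊆ (M.delete e).E) (hcard : A.card + 1 = M.rk) :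
    (M.delete e).Indep A := by
  have heA : e ∉ A := notMem_of_subset_ground_delete hA
  obtain ⟨B, hB, heB⟩ := hM.exists_basis_notMem hcol
  obtain ⟨b, hb, hbasis⟩ := hM.2.2.2 _ (he.insert_mem_bases hA hcard) B hB e (by simp [heB])
  rw [Finset.erase_insert heA] at hbasis
  have heb : e ≠ b := fun h => heB (h ▸ (Finset.mem_sdiff.1 hb).1)
  exact ⟨insert b A, mem_bases_delete.2 ⟨hbasis, by simp [heb, heA]⟩, Finset.subset_insert b A⟩

theorem AvoidsNonbases.paving_delete (he : M.AvoidsNonbases e) (hM : M.IsMatroid)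
    (hcol : ¬M.IsColoop e) : (M.delete e).Paving :=
  (hM.delete hcol).paving_of_forall_indep fun _ hA hcard =>
    he.indep_delete hM hcol hA (hcard.trans (hM.rk_delete hcol))

theorem AvoidsNonbases.isFreeExtension_delete (he : M.AvoidsNonbases e) (hM : M.IsMatroid)
    (hcol : ¬M.IsColoop e) (hrk : 1 ≤ M.rk) : M.IsFreeExtension (M.delete e) e := by
  refine ⟨Finset.notMem_erase e M.E, (Finset.insert_erase he.1).symm, fun B => ⟨fun hB => ?_, ?_⟩⟩
  · by_cases heB : e ∈ B
    · have hcard : (B.erase e).card + 1 = M.rk := by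
        rw [Finset.card_erase_add_one heB, hM.card_eq_rk hB]
      have hground : B.erase e ⊆ (M.delete e).E := Finset.erase_subset_erase e (hM.2.1 B hB)
      exact Or.inr ⟨B.erase e, he.indep_delete hM hcol hground hcard,
        by rw [hM.rk_delete hcol]; lia, (Finset.insert_erase heB).symm⟩
    · exact Or.inl (mem_bases_delete.2 ⟨hB, heB⟩)
  · rintro (hB | ⟨A, hA, hcard, rfl⟩)
    · exact (mem_bases_delete.1 hB).1
    · rw [hM.rk_delete hcol] at hcard
      exact he.insert_mem_bases ((hM.delete hcol).subset_ground hA) (by lia)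

theorem AvoidsNonbases.mem_bases_iff (he : M.AvoidsNonbases e) (hM : M.IsMatroid)
    (hcol : M.IsColoop e) (hB : B ⊆ M.E) : B ∈ M.bases ↔ e ∈ B ∧ B.card = M.rk :=
  ⟨fun h => ⟨hcol.2 B h, hM.card_eq_rk h⟩, fun ⟨heB, hcard⟩ => he.2 B hB hcard heB⟩

theorem IsFreeExtension.avoidsNonbases (h : M.IsFreeExtension N e) (hN : N.Paving)
    (hrk : N.rk = M.rk) : M.AvoidsNonbases e := by
  obtain ⟨-, hground, hbases⟩ := h
  refine ⟨hground ▸ Finset.mem_insert_self e N.E, fun B hB hcard heB => ?_⟩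
  have hA : B.erase e ⊆ N.E := Finset.subset_insert_iff.1 (hground ▸ hB)
  have hAcard : (B.erase e).card + 1 = N.rk := by
    rw [Finset.card_erase_add_one heB, hcard, hrk]
  exact (hbases B).2 <| Or.inr
    ⟨B.erase e, hN.indep_of_card_lt_rk hA (by lia), by lia, (Finset.insert_erase heB).symm⟩

end Bases

section DirectSum

variable {α β γ : Type*} [DecidableEq β] [DecidableEq γ]

theorem mem_bases_directSum {M : PreMatroid β} {N : PreMatroid γ} {B : Finset (β ⊕ γ)} :
    B ∈ (M.directSum N).bases ↔ B.toLeft ∈ M.bases ∧ B.toRight ∈ N.bases := by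
  have hunion (S : Finset β) (T : Finset γ) :
      S.map ⟨Sum.inl, Sum.inl_injective⟩ ∪ T.map ⟨Sum.inr, Sum.inr_injective⟩ = S.disjSum T := by
    ext (x | x) <;> simp
  simp only [directSum, hunion, Finset.mem_image, Finset.mem_product, Prod.exists]
  constructor
  · rintro ⟨S, T, ⟨hS, hT⟩, rfl⟩
    simpa using ⟨hS, hT⟩
  · exact fun h => ⟨B.toLeft, B.toRight, h, Finset.toLeft_disjSum_toRight⟩

variable [Fintype γ] {k : ℕ}

theorem ground_directSum_uniform_univ [Fintype β] {j : ℕ} :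
    (directSum (uniform (Finset.univ : Finset β) j) (uniform (Finset.univ : Finset γ) k)).E =
      Finset.univ := by
  ext (x | x) <;> simp [directSum, uniform]

theorem mem_bases_directSum_uniform_unit {B : Finset (Unit ⊕ γ)} :
    B ∈ (directSum (uniform (Finset.univ : Finset Unit) 1)
        (uniform (Finset.univ : Finset γ) k)).bases ↔
      Sum.inl () ∈ B ∧ B.card = k + 1 := by
  have hleft : B.toLeft.card = 1 ↔ Sum.inl () ∈ B := by
    rw [← Finset.mem_toLeft, ← Fintype.card_unit, Finset.card_eq_iff_eq_univ,
      Finset.eq_univ_iff_forall]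
    exact ⟨fun h => h (), fun h _ => h⟩
  have hsum := B.card_toLeft_add_card_toRight
  simp only [mem_bases_directSum, uniform, Finset.mem_powersetCard_univ, hleft]
  refine and_congr_right fun hmem => ?_
  have := hleft.2 hmem
  lia

theorem image_mem_bases_directSum_uniform_unit {E B : Finset α} {φ : α → Unit ⊕ γ} {e : α}
    (hφ : Set.InjOn φ E) (he : e ∈ E) (hφe : φ e = Sum.inl ()) (hB : B ⊆ E) :
    B.image φ ∈ (directSum (uniform (Finset.univ : Finset Unit) 1)
        (uniform (Finset.univ : Finset γ) k)).bases ↔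
      e ∈ B ∧ B.card = k + 1 := by
  have hmem : Sum.inl () ∈ B.image φ ↔ e ∈ B := by
    rw [← hφe, ← Finset.mem_coe, Finset.coe_image]
    exact hφ.mem_image_iff (Finset.coe_subset.2 hB) he
  rw [mem_bases_directSum_uniform_unit, hmem,
    Finset.card_image_of_injOn (hφ.mono (Finset.coe_subset.2 hB))]

theorem iso_directSum_uniform_unit_iff {M : PreMatroid α} :
    M.Iso (directSum (uniform (Finset.univ : Finset Unit) 1)
        (uniform (Finset.univ : Finset γ) k)) ↔
      M.E.card = Fintype.card γ + 1 ∧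
        ∃ e ∈ M.E, ∀ B ⊆ M.E, (B ∈ M.bases ↔ e ∈ B ∧ B.card = k + 1) := by
  have hcard_sum : Fintype.card (Unit ⊕ γ) = Fintype.card γ + 1 := by
    rw [Fintype.card_sum, Fintype.card_unit, add_comm]
  simp only [Iso, IsIsoMap, ground_directSum_uniform_univ]
  constructor
  · rintro ⟨φ, hφ, hbases⟩
    obtain ⟨e, he, hφe⟩ := hφ.surjOn (Finset.mem_univ (Sum.inl ()))
    refine ⟨?_, e, he, fun B hB => (hbases B hB).trans <|
      image_mem_bases_directSum_uniform_unit hφ.injOn he hφe hB⟩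
    rw [← hcard_sum, ← Finset.card_univ]
    exact Finset.card_nbij φ hφ.mapsTo hφ.injOn hφ.surjOn
  · rintro ⟨hcard, e, he, hbases⟩
    obtain ⟨φ, hφ, hφe⟩ := exists_bijOn_univ_apply_eq he (Sum.inl () : Unit ⊕ γ)
      (hcard_sum.trans hcard.symm)
    exact ⟨φ, by rwa [Finset.coe_univ], fun B hB => (hbases B hB).trans
      (image_mem_bases_directSum_uniform_unit hφ.injOn he hφe hB).symm⟩

end DirectSum

end PreMatroid

theorem stmt0 {α : Type*} [DecidableEq α] (M : PreMatroid α) (r n : ℕ)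
    (hM : M.IsMatroid) (hrk : M.rk = r) (hr : 1 ≤ r) (hn : M.E.card = n) :
    (∃ e ∈ M.E, ∀ B ⊆ M.E, B.card = r → e ∈ B → B ∈ M.bases) ↔
      ((∃ (N : PreMatroid α) (e : α), N.IsMatroid ∧ N.Paving ∧ N.rk = r ∧
          M.IsFreeExtension N e) ∨
        M.Iso (PreMatroid.directSum (PreMatroid.uniform (Finset.univ : Finset Unit) 1)
          (PreMatroid.uniform (Finset.univ : Finset (Fin (n - 1))) (r - 1)))) := by
  subst hrk hn
  constructor
  · rintro ⟨e, he : M.AvoidsNonbases e⟩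
    by_cases hcol : M.IsColoop e
    · have hcard : M.E.card = Fintype.card (Fin (M.E.card - 1)) + 1 := by
        rw [Fintype.card_fin, Nat.sub_add_cancel (Finset.card_pos.2 ⟨e, he.1⟩)]
      refine Or.inr (iso_directSum_uniform_unit_iff.2 ⟨hcard, e, he.1, fun B hB => ?_⟩)
      rw [Nat.sub_add_cancel hr]
      exact he.mem_bases_iff hM hcol hB
    · exact Or.inl ⟨M.delete e, e, hM.delete hcol, he.paving_delete hM hcol, hM.rk_delete hcol,
        he.isFreeExtension_delete hM hcol hr⟩
  · rintro (⟨N, e, -, hN, hrk, hext⟩ | hiso)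
    · exact ⟨e, hext.avoidsNonbases hN hrk⟩
    · obtain ⟨-, e, he, hbases⟩ := iso_directSum_uniform_unit_iff.1 hiso
      exact ⟨e, he, fun B hB hcard heB => (hbases B hB).2 ⟨heB, by lia⟩⟩

end MatroidGame
end

section
/- Let M be a rank 3 sparse paving matroid on finite ground set E, and for each cyclic hyperplane H of M fix a sign s_H ∈ {+1,−1}. Let NB' be the collection of 3-element subsets {(a,t_a),(b,t_b),(c,t_c)} of E × {+1,−1} such that {a,b,c} is a cyclic hyperplane H of M and t_a·t_b·t_c = s_H. Then there exists a matroid of rank 3 on the ground set E × {+1,−1} whose bases are exactly the 3-element subsets of E × {+1,−1} not belonging to NB'; equivalently, this collection of 3-element subsets satisfies the basis exchange axiom. -/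
open scoped BigOperators TensorProduct

namespace MatroidGame

open PreMatroid

def bsgn (b : Bool) : ℤ := if b then 1 else -1

/-- The nonbases `NB'` of the lifted matroid `M_S`. -/
def liftNonbasis {α : Type*} [DecidableEq α] (M : PreMatroid α) (s : Finset α → ℤ)
    (B : Finset (α × Bool)) : Prop :=
  (B.image Prod.fst).card = B.card ∧ M.IsCyclicHyperplane (B.image Prod.fst) ∧
    (∏ x ∈ B, bsgn x.2) = s (B.image Prod.fst)

/-- The candidate matroid `M_S` on `E × {±1}`: bases are the 3-element subsets not in `NB'`. -/
noncomputable def lift {α : Type*} [DecidableEq α] (M : PreMatroid α) (s : Finset α → ℤ) :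
    PreMatroid (α × Bool) := by
  classical
  exact ⟨M.E ×ˢ (Finset.univ : Finset Bool),
    ((M.E ×ˢ (Finset.univ : Finset Bool)).powersetCard 3).filter
      fun B => ¬ liftNonbasis M s B⟩

/-!
A nonempty family of `r`-subsets, in which any `(r - 1)`-subset extends to at most one non-member,
is the set of bases of a matroid: in an exchange between two bases `B₁` and `B₂` at `a`, either
`B₂ \ B₁` offers two candidates, one of which must work, or it offers a single one, which turns
`B₁` into `B₂`.

The 3-subsets outside `NB'` form such a family. If `D ∪ {b}` and `D ∪ {c}` are both in `NB'`, their
projections to `E` are cyclic hyperplanes which differ in at most one element. The element of the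
first outside the projection of `D` lies on a circuit, hence in the closure of the rest, hence in
the second. So `b` and `c` have the same projection, and the sign condition determines their signs.
-/

namespace PreMatroid

variable {α : Type*} [DecidableEq α] {M : PreMatroid α}

theorem isMatroid_of_subsingleton_nonbasis_insert {r : ℕ} (hne : M.bases.Nonempty)
    (hr : M.bases ⊆ M.E.powersetCard r)
    (hsub : ∀ D ⊆ M.E, D.card + 1 = r →
      {b | b ∈ M.E \ D ∧ insert b D ∉ M.bases}.Subsingleton) :
    M.IsMatroid := by
  have hE : ∀ B ∈ M.bases, B ⊆ M.E := fun B hB => (Finset.mem_powersetCard.1 (hr hB)).1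
  have hcard : ∀ B ∈ M.bases, B.card = r := fun B hB => (Finset.mem_powersetCard.1 (hr hB)).2
  have hcard_eq : ∀ B₁ ∈ M.bases, ∀ B₂ ∈ M.bases, B₁.card = B₂.card := fun B₁ h₁ B₂ h₂ =>
    (hcard B₁ h₁).trans (hcard B₂ h₂).symm
  refine ⟨hne, hE, hcard_eq, fun B₁ h₁ B₂ h₂ a ha => ?_⟩
  by_contra! hno
  have ha₁ : a ∈ B₁ := (Finset.mem_sdiff.1 ha).1
  have hsdiff : (B₁ \ B₂).card = (B₂ \ B₁).card := Finset.card_sdiff_comm (hcard_eq _ h₁ _ h₂)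
  have hle : (B₂ \ B₁).card ≤ 1 := by
    have hinsert := hsub (B₁.erase a) ((Finset.erase_subset a B₁).trans (hE B₁ h₁))
      ((Finset.card_erase_add_one ha₁).trans (hcard B₁ h₁))
    have hcand : ∀ b ∈ B₂ \ B₁, b ∈ M.E \ B₁.erase a := fun b hb =>
      Finset.sdiff_subset_sdiff (hE B₂ h₂) (Finset.erase_subset a B₁) hb
    exact Finset.card_le_one.2 fun b hb c hc =>
      hinsert ⟨hcand b hb, hno b hb⟩ ⟨hcand c hc, hno c hc⟩
  have hone : (B₁ \ B₂).card = 1 :=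
    le_antisymm (hsdiff.trans_le hle) (Finset.card_pos.2 ⟨a, ha⟩)
  obtain ⟨a', ha'⟩ := Finset.card_eq_one.1 hone
  obtain ⟨b, hb⟩ := Finset.card_eq_one.1 (hsdiff.symm.trans hone)
  have hswap : insert b (B₁.erase a) = B₂ := by grind
  exact hno b (hb ▸ Finset.mem_singleton_self b) (hswap ▸ h₂)

/-- The Mathlib matroid with the same ground set and bases, through which Mathlib's theory of
closure and rank applies to matroids presented by finsets. -/
def IsMatroid.toMatroid (hM : M.IsMatroid) : Matroid α :=
  Matroid.ofIsBaseOfFinite (E := M.E) M.E.finite_toSet (fun B => ∃ B' ∈ M.bases, (B' : Set α) = B)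
    (hM.1.elim fun B hB => ⟨B, B, hB, rfl⟩)
    (by
      rintro _ _ ⟨B₁, h₁, rfl⟩ ⟨B₂, h₂, rfl⟩ a ha
      obtain ⟨b, hb, hB⟩ := hM.2.2.2 B₁ h₁ B₂ h₂ a (by simpa using ha)
      exact ⟨b, by simpa using hb, _, hB, by push_cast; rfl⟩)
    (by
      rintro _ ⟨B, hB, rfl⟩
      exact_mod_cast hM.2.1 B hB)

namespace IsMatroid

variable (hM : M.IsMatroid)
include hM

theorem toMatroid_ground : hM.toMatroid.E = M.E :=
  Matroid.ofIsBaseOfFinite_E ..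

theorem toMatroid_isBase_iff {B : Set α} :
    hM.toMatroid.IsBase B ↔ ∃ B' ∈ M.bases, (B' : Set α) = B :=
  iff_of_eq (congrFun (Matroid.ofIsBaseOfFinite_isBase ..) B)

theorem toMatroid_isBase {B : Finset α} (hB : B ∈ M.bases) : hM.toMatroid.IsBase B :=
  hM.toMatroid_isBase_iff.2 ⟨B, hB, rfl⟩

theorem toMatroid_indep_iff {I : Finset α} : hM.toMatroid.Indep I ↔ M.Indep I := by
  rw [Matroid.indep_iff]
  constructor
  · rintro ⟨_, hB', hI⟩
    obtain ⟨B, hB, rfl⟩ := hM.toMatroid_isBase_iff.1 hB'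
    exact ⟨B, hB, Finset.coe_subset.1 hI⟩
  · rintro ⟨B, hB, hI⟩
    exact ⟨B, hM.toMatroid_isBase hB, Finset.coe_subset.2 hI⟩

theorem eRk_toMatroid (X : Finset α) : hM.toMatroid.eRk X = M.rkSet X := by
  refine le_antisymm (Matroid.eRk_le_iff.2 fun I hIX hI => ?_) (Matroid.le_eRk_iff.2 ?_)
  · lift I to Finset α using X.finite_toSet.subset hIX
    rw [Set.encard_coe_eq_coe_finsetCard, Nat.cast_le]
    exact Finset.le_sup (f := Finset.card) (Finset.mem_filter.2
      ⟨Finset.mem_powerset.2 (Finset.coe_subset.1 hIX), hM.toMatroid_indep_iff.1 hI⟩)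
  · have hempty : M.Indep ∅ := hM.1.imp fun B hB => ⟨hB, B.empty_subset⟩
    obtain ⟨I, hI, hcard⟩ := Finset.exists_mem_eq_sup (X.powerset.filter fun I => M.Indep I)
      ⟨∅, by simpa using hempty⟩ Finset.card
    rw [Finset.mem_filter, Finset.mem_powerset] at hI
    exact ⟨I, Finset.coe_subset.2 hI.1, hM.toMatroid_indep_iff.2 hI.2, by
      rw [Set.encard_coe_eq_coe_finsetCard, rkSet, hcard]⟩

theorem rk_eq_card {B : Finset α} (hB : B ∈ M.bases) : M.rk = B.card := by
  have hrank : hM.toMatroid.eRk M.E = (B : Set α).encard := by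
    rw [(hM.toMatroid_isBase hB).encard_eq_eRank, ← hM.toMatroid.eRk_ground, hM.toMatroid_ground]
  rw [hM.eRk_toMatroid, Set.encard_coe_eq_coe_finsetCard] at hrank
  exact_mod_cast hrank

theorem rk_le_card_ground_s5 : M.rk ≤ M.E.card := by
  obtain ⟨B, hB⟩ := hM.1
  exact (hM.rk_eq_card hB).trans_le (Finset.card_le_card (hM.2.1 B hB))

theorem toMatroid_isCircuit {C : Finset α} (hC : M.Circuit C) : hM.toMatroid.IsCircuit C := by
  have hCE : (C : Set α) ⊆ hM.toMatroid.E :=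
    hM.toMatroid_ground ▸ Finset.coe_subset.2 hC.1
  refine Matroid.isCircuit_iff_forall_ssubset.2
    ⟨⟨fun h => hC.2.1 (hM.toMatroid_indep_iff.1 h), hCE⟩, fun I hI => ?_⟩
  lift I to Finset α using C.finite_toSet.subset hI.subset
  exact hM.toMatroid_indep_iff.2 (hC.2.2 I (Finset.coe_ssubset.1 hI))

theorem toMatroid_isFlat {F : Finset α} (hF : M.IsFlat F) : hM.toMatroid.IsFlat F := by
  have hFE : (F : Set α) ⊆ hM.toMatroid.E :=
    hM.toMatroid_ground ▸ Finset.coe_subset.2 hF.1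
  refine Matroid.isFlat_iff_closure_eq.2
    (subset_antisymm (fun x hx => ?_) (hM.toMatroid.subset_closure F hFE))
  have hrk : hM.toMatroid.eRk (insert x F : Finset α) = hM.toMatroid.eRk F := by
    rw [Finset.coe_insert, ← Matroid.eRk_closure_eq, Matroid.closure_insert_eq_of_mem_closure hx,
      Matroid.eRk_closure_eq]
  rw [hM.eRk_toMatroid, hM.eRk_toMatroid, Nat.cast_inj] at hrk
  have hxE : x ∈ (M.E : Set α) := hM.toMatroid_ground ▸ hM.toMatroid.closure_subset_ground F hx
  have hxcl : x ∈ M.cl F := Finset.mem_filter.2 ⟨hxE, hrk⟩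
  rwa [hF.2] at hxcl

theorem mem_of_circuit_erase_subset_flat {C F : Finset α} {x : α} (hC : M.Circuit C)
    (hF : M.IsFlat F) (hx : x ∈ C) (hCF : C.erase x ⊆ F) : x ∈ F := by
  have hcl : x ∈ hM.toMatroid.closure (C \ {x}) :=
    (hM.toMatroid_isCircuit hC).mem_closure_sdiff_singleton_of_mem hx
  have hsub : (C : Set α) \ {x} ⊆ F := by exact_mod_cast hCF
  exact (hM.toMatroid_isFlat hF).closure.subset (hM.toMatroid.closure_subset_closure hsub hcl)

theorem eq_of_circuit_subset_insert_of_flat_insert {C D : Finset α} {a b : α}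
    (hC : M.Circuit C) (haC : a ∈ C) (hCD : C ⊆ insert a D) (ha : a ∉ D)
    (hF : M.IsFlat (insert b D)) : a = b := by
  have hCb : C.erase a ⊆ insert b D :=
    (Finset.subset_insert_iff.1 hCD).trans (Finset.subset_insert b D)
  have hab : a ∈ insert b D := hM.mem_of_circuit_erase_subset_flat hC hF haC hCb
  exact (Finset.mem_insert.1 hab).resolve_right ha

end IsMatroid

end PreMatroid

theorem bsgn_injective : Function.Injective bsgn := by
  decide

theorem bsgn_ne_zero (b : Bool) : bsgn b ≠ 0 := by
  cases b <;> decide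

section Lift

variable {α : Type*} [DecidableEq α] {M : PreMatroid α} {s : Finset α → ℤ}

theorem mem_lift_bases {B : Finset (α × Bool)} :
    B ∈ (lift M s).bases ↔ B ∈ (lift M s).E.powersetCard 3 ∧ ¬ liftNonbasis M s B := by
  classical exact Finset.mem_filter

theorem liftNonbasis_of_notMem_bases {B : Finset (α × Bool)}
    (hB : B ∈ (lift M s).E.powersetCard 3) (hB' : B ∉ (lift M s).bases) : liftNonbasis M s B :=
  not_not.1 fun h => hB' (mem_lift_bases.2 ⟨hB, h⟩)

theorem injOn_fst_of_liftNonbasis {B : Finset (α × Bool)} (hB : liftNonbasis M s B) :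
    Set.InjOn Prod.fst (B : Set (α × Bool)) :=
  Finset.card_image_iff.1 hB.1

theorem fst_notMem_image_of_liftNonbasis_insert {D : Finset (α × Bool)} {b : α × Bool} (hb : b ∉ D)
    (h : liftNonbasis M s (insert b D)) : b.1 ∉ D.image Prod.fst := by
  intro hmem
  obtain ⟨d, hd, hdb⟩ := Finset.mem_image.1 hmem
  have hdb' : d = b := injOn_fst_of_liftNonbasis h (Finset.mem_insert_of_mem hd)
    (Finset.mem_insert_self b D) hdb
  exact hb (hdb' ▸ hd)

theorem eq_of_liftNonbasis_insert (hM : M.IsMatroid) {D : Finset (α × Bool)} {b c : α × Bool}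
    (hb : b ∉ D) (hc : c ∉ D) (h₁ : liftNonbasis M s (insert b D))
    (h₂ : liftNonbasis M s (insert c D)) : b = c := by
  have hbD := fst_notMem_image_of_liftNonbasis_insert hb h₁
  obtain ⟨-, hH₁, hs₁⟩ := h₁
  obtain ⟨-, hH₂, hs₂⟩ := h₂
  rw [Finset.image_insert] at hH₁ hs₁ hH₂ hs₂
  obtain ⟨C, hC, hCD, hbC⟩ := hH₁.2 b.1 (Finset.mem_insert_self _ _)
  have hfst : b.1 = c.1 :=
    hM.eq_of_circuit_subset_insert_of_flat_insert hC hbC hCD hbD hH₂.1.1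
  have hsgn : bsgn b.2 * ∏ x ∈ D, bsgn x.2 = bsgn c.2 * ∏ x ∈ D, bsgn x.2 := by
    rw [← Finset.prod_insert (f := fun x : α × Bool => bsgn x.2) hb,
      ← Finset.prod_insert (f := fun x : α × Bool => bsgn x.2) hc, hs₁, hs₂, hfst]
  have hprod : ∏ x ∈ D, bsgn x.2 ≠ 0 := Finset.prod_ne_zero_iff.2 fun x _ => bsgn_ne_zero x.2
  exact Prod.ext hfst (bsgn_injective (mul_right_cancel₀ hprod hsgn))

theorem lift_bases_nonempty (hE : M.E.Nontrivial) : (lift M s).bases.Nonempty := by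
  obtain ⟨a, ha, b, hb, hab⟩ := hE
  let B : Finset (α × Bool) := {(a, true), (a, false), (b, true)}
  have hBE : B ⊆ M.E ×ˢ Finset.univ := by
    simp only [B, Finset.insert_subset_iff, Finset.singleton_subset_iff, Finset.mem_product,
      Finset.mem_univ, and_true]
    exact ⟨ha, ha, hb⟩
  have hBcard : B.card = 3 := Finset.card_eq_three.2 ⟨_, _, _, by simp, by simp [hab], by simp, rfl⟩
  refine ⟨B, mem_lift_bases.2 ⟨Finset.mem_powersetCard.2 ⟨hBE, hBcard⟩, fun h => ?_⟩⟩
  have htf : (a, true) = (a, false) := injOn_fst_of_liftNonbasis h (by simp [B]) (by simp [B]) rfl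
  simp at htf

theorem stmt5_general (M : PreMatroid α) (hM : M.IsMatroid) (hE : M.E.Nontrivial)
    (s : Finset α → ℤ) : (lift M s).IsMatroid ∧ (lift M s).rk = 3 := by
  have hlift : (lift M s).IsMatroid := by
    refine isMatroid_of_subsingleton_nonbasis_insert (r := 3) (lift_bases_nonempty hE)
      (fun B hB => (mem_lift_bases.1 hB).1) fun D hD hcard b hb c hc => ?_
    have hnonbasis : ∀ x ∈ (lift M s).E \ D, insert x D ∉ (lift M s).bases →
        liftNonbasis M s (insert x D) := fun x hx hxB => by
      obtain ⟨hxE, hxD⟩ := Finset.mem_sdiff.1 hx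
      exact liftNonbasis_of_notMem_bases (Finset.mem_powersetCard.2
        ⟨Finset.insert_subset hxE hD, (Finset.card_insert_of_notMem hxD).trans hcard⟩) hxB
    exact eq_of_liftNonbasis_insert hM (Finset.mem_sdiff.1 hb.1).2 (Finset.mem_sdiff.1 hc.1).2
      (hnonbasis b hb.1 hb.2) (hnonbasis c hc.1 hc.2)
  obtain ⟨B, hB⟩ := hlift.1
  exact ⟨hlift, (hlift.rk_eq_card hB).trans (Finset.mem_powersetCard.1 (mem_lift_bases.1 hB).1).2⟩

end Lift

theorem stmt5 {α : Type*} [DecidableEq α] (M : PreMatroid α) (hM : M.IsMatroid)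
    (h3 : M.rk = 3) (hsp : M.SparsePaving) (s : Finset α → ℤ)
    (hs : ∀ H, M.IsCyclicHyperplane H → s H = 1 ∨ s H = -1) :
    (lift M s).IsMatroid ∧ (lift M s).rk = 3 :=
  have hcard : 3 ≤ M.E.card := h3 ▸ hM.rk_le_card_ground_s5
  stmt5_general M hM (Finset.one_lt_card_iff_nontrivial.1 (by lia)) s

end MatroidGame
end

section
/- The matroids P and Q are not isomorphic: there is no bijection φ of E = {1,…,9} × {+1,−1} to itself such that B is a basis of P if and only if φ(B) is a basis of Q. -/
open scoped BigOperators TensorProduct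

namespace MatroidGame

open PreMatroid

/-- The rows and columns of the 3×3 grid (0-indexed). -/
def rowcol : Finset (Finset (Fin 9)) :=
  {{0, 1, 2}, {3, 4, 5}, {6, 7, 8}, {0, 3, 6}, {1, 4, 7}, {2, 5, 8}}

/-- The matroid `P = M_hom` on `{1,…,9} × {±1}`. -/
def matP : PreMatroid (Fin 9 × Bool) :=
  ⟨Finset.univ,
    ((Finset.univ : Finset (Fin 9 × Bool)).powersetCard 3).filter fun B =>
      ¬ (B.image Prod.fst ∈ rowcol ∧ (∏ x ∈ B, bsgn x.2) = 1)⟩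

/-- The matroid `Q = M_S` on `{1,…,9} × {±1}`, where the row `{7,8,9}` gets sign `-1`. -/
def matQ : PreMatroid (Fin 9 × Bool) :=
  ⟨Finset.univ,
    ((Finset.univ : Finset (Fin 9 × Bool)).powersetCard 3).filter fun B =>
      ¬ ((B.image Prod.fst ∈ rowcol ∧ B.image Prod.fst ≠ {6, 7, 8} ∧
            (∏ x ∈ B, bsgn x.2) = 1) ∨
          (B.image Prod.fst = {6, 7, 8} ∧ (∏ x ∈ B, bsgn x.2) = -1))⟩

/-! In each of the two matroids the nonbases are the *signed lines*: the lifts of a row or column to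
signed points whose signs multiply to the sign prescribed for that row or column. An isomorphism
maps signed lines to signed lines, hence preserves collinearity. Two signed points lie in the same
fibre `{(i, true), (i, false)}` exactly when they are collinear with the same points, so the
isomorphism maps fibres to fibres and induces a collineation `ψ` of the grid. If `u i` is the sign
of the image of `(i, true)`, the sign prescribed for `ψ ℓ` is that for `ℓ` times `∏ i ∈ ℓ, u i`. In
the product over all `ℓ` every `u i` occurs an even number of times, so the product of the
prescribed signs is an invariant; it is `1` for `P` and `-1` for `Q`. -/

open Finset Function

section Bsgn

variable {α : Type*}

lemma bsgn_sq (s : Bool) : bsgn s ^ 2 = 1 := by cases s <;> rfl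

lemma bsgn_not (s : Bool) : bsgn (!s) = -bsgn s := by cases s <;> rfl

lemma prod_bsgn_update_not [DecidableEq α] {ℓ : Finset α} {k : α} (hk : k ∈ ℓ) (σ : α → Bool) :
    ∏ i ∈ ℓ, bsgn (update σ k (!σ k) i) = -∏ i ∈ ℓ, bsgn (σ i) := by
  rw [← mul_prod_erase ℓ _ hk, ← mul_prod_erase ℓ (fun i => bsgn (σ i)) hk, update_self, bsgn_not,
    neg_mul]
  congr 2
  exact prod_congr rfl fun i hi => by rw [update_of_ne (ne_of_mem_erase hi)]

lemma prod_bsgn_eq_or_eq_neg (ℓ : Finset α) (σ : α → Bool) (c : Bool) :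
    ∏ i ∈ ℓ, bsgn (σ i) = bsgn c ∨ ∏ i ∈ ℓ, bsgn (σ i) = -bsgn c := by
  rw [← sq_eq_sq_iff_eq_or_eq_neg, ← prod_pow, bsgn_sq]
  exact prod_eq_one fun i _ => bsgn_sq (σ i)

lemma exists_prod_bsgn_eq {ℓ : Finset α} (hℓ : 2 < #ℓ) {i j : α} (hij : i ≠ j) (s t c : Bool) :
    ∃ σ : α → Bool, σ i = s ∧ σ j = t ∧ ∏ k ∈ ℓ, bsgn (σ k) = bsgn c := by
  classical
  let σ : α → Bool := update (fun _ => t) i s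
  have hσi : σ i = s := update_self ..
  have hσj : σ j = t := update_of_ne hij.symm ..
  rcases prod_bsgn_eq_or_eq_neg ℓ σ c with h | h
  · exact ⟨σ, hσi, hσj, h⟩
  · obtain ⟨k, hk, hk'⟩ : ∃ k ∈ ℓ, k ∉ ({i, j} : Finset α) :=
      exists_mem_notMem_of_card_lt_card (card_le_two.trans_lt hℓ)
    simp only [mem_insert, mem_singleton, not_or] at hk'
    refine ⟨update σ k (!σ k), ?_, ?_, ?_⟩
    · rw [update_of_ne (Ne.symm hk'.1), hσi]
    · rw [update_of_ne (Ne.symm hk'.2), hσj]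
    · rw [prod_bsgn_update_not hk, h, neg_neg]

end Bsgn

lemma prod_prod_eq_one_of_even {α M : Type*} [DecidableEq α] [CommMonoid M]
    {T : Finset (Finset α)} (hT : ∀ i, Even #{ℓ ∈ T | i ∈ ℓ}) {u : α → M} (hu : ∀ i, u i ^ 2 = 1) :
    ∏ ℓ ∈ T, ∏ i ∈ ℓ, u i = 1 :=
  calc ∏ ℓ ∈ T, ∏ i ∈ ℓ, u i
      = ∏ i ∈ T.biUnion id, ∏ ℓ ∈ T with i ∈ ℓ, u i := prod_comm' (by grind)
    _ = ∏ i ∈ T.biUnion id, u i ^ #{ℓ ∈ T | i ∈ ℓ} := by simp only [prod_const]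
    _ = 1 := prod_eq_one fun i _ => by
      obtain ⟨n, hn⟩ := (hT i).two_dvd
      rw [hn, pow_mul, hu, one_pow]

section Collinearity

variable {α β : Type*}

/-- The collinearity graph of a family of lines, each given as its set of points: distinct points
are adjacent when some line contains both. -/
def collinearityGraph (L : Set (Finset α)) : SimpleGraph α where
  Adj x y := x ≠ y ∧ ∃ ℓ ∈ L, x ∈ ℓ ∧ y ∈ ℓ
  symm := ⟨fun _ _ ⟨hne, ℓ, hℓ, hx, hy⟩ => ⟨hne.symm, ℓ, hℓ, hy, hx⟩⟩
  loopless := ⟨fun _ h => h.1 rfl⟩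

lemma neighborSet_comap_eq_iff {G : SimpleGraph β} (hG : Injective G.neighborSet) {f : α → β}
    (hf : Surjective f) (x y : α) :
    (G.comap f).neighborSet x = (G.comap f).neighborSet y ↔ f x = f y := by
  rw [← hG.eq_iff]
  simp only [Set.ext_iff, SimpleGraph.mem_neighborSet, SimpleGraph.comap_adj, hf.forall]

variable [DecidableEq α] [DecidableEq β]

/-- A collineation between two families of lines: a bijection of the points which, together with
its inverse, maps lines to lines. -/
structure IsCollineation (L : Set (Finset α)) (L' : Set (Finset β)) (e : α ≃ β) : Prop where
  image_mem : ∀ ℓ ∈ L, ℓ.image e ∈ L'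
  image_symm_mem : ∀ ℓ ∈ L', ℓ.image e.symm ∈ L

namespace IsCollineation

variable {L : Set (Finset α)} {L' : Set (Finset β)} {e : α ≃ β}

lemma symm (he : IsCollineation L L' e) : IsCollineation L' L e.symm :=
  ⟨he.image_symm_mem, he.image_mem⟩

lemma adj_apply (he : IsCollineation L L' e) {x y : α} (h : (collinearityGraph L).Adj x y) :
    (collinearityGraph L').Adj (e x) (e y) := by
  obtain ⟨hne, ℓ, hℓ, hx, hy⟩ := h
  exact ⟨e.injective.ne hne, ℓ.image e, he.image_mem ℓ hℓ, mem_image_of_mem e hx,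
    mem_image_of_mem e hy⟩

lemma adj_apply_iff (he : IsCollineation L L' e) (x y : α) :
    (collinearityGraph L').Adj (e x) (e y) ↔ (collinearityGraph L).Adj x y :=
  ⟨fun h => by simpa only [e.symm_apply_apply] using he.symm.adj_apply h, he.adj_apply⟩

lemma neighborSet_apply_eq_iff (he : IsCollineation L L' e) (x y : α) :
    (collinearityGraph L').neighborSet (e x) = (collinearityGraph L').neighborSet (e y) ↔
      (collinearityGraph L).neighborSet x = (collinearityGraph L).neighborSet y := by
  simp only [Set.ext_iff, SimpleGraph.mem_neighborSet, e.surjective.forall, he.adj_apply_iff]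

lemma prod_image {M : Type*} [CommMonoid M] {T : Finset (Finset α)} {T' : Finset (Finset β)}
    (he : IsCollineation (T : Set (Finset α)) T' e) (f : Finset β → M) :
    ∏ ℓ ∈ T, f (ℓ.image e) = ∏ ℓ ∈ T', f ℓ :=
  prod_nbij' (image e) (image e.symm) he.image_mem he.image_symm_mem
    (fun ℓ _ => by simp [image_image]) (fun ℓ _ => by simp [image_image]) fun _ _ => rfl

end IsCollineation

end Collinearity

section Fibrewise

variable {α β : Type*} {e : α × Bool ≃ β × Bool}

/-- A bijection of signed points that maps each fibre `{(i, true), (i, false)}` onto a fibre. -/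
def IsFibrewise (e : α × Bool ≃ β × Bool) : Prop :=
  ∀ x y, (e x).1 = (e y).1 ↔ x.1 = y.1

namespace IsFibrewise

lemma symm (he : IsFibrewise e) : IsFibrewise e.symm := fun x y => by
  rw [← he, e.apply_symm_apply, e.apply_symm_apply]

/-- The bijection of unsigned points induced by a fibrewise bijection of signed points. -/
def baseEquiv (he : IsFibrewise e) : α ≃ β where
  toFun i := (e (i, true)).1
  invFun j := (e.symm (j, true)).1
  left_inv i := ((he.symm ((e (i, true)).1, true) (e (i, true))).2 rfl).trans
    (congrArg Prod.fst (e.symm_apply_apply (i, true)))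
  right_inv j := ((he ((e.symm (j, true)).1, true) (e.symm (j, true))).2 rfl).trans
    (congrArg Prod.fst (e.apply_symm_apply (j, true)))

lemma fst_apply (he : IsFibrewise e) (x : α × Bool) : (e x).1 = he.baseEquiv x.1 :=
  (he x (x.1, true)).2 rfl

lemma bsgn_snd_apply (he : IsFibrewise e) (x : α × Bool) :
    bsgn (e x).2 = bsgn x.2 * bsgn (e (x.1, true)).2 := by
  obtain ⟨i, _ | _⟩ := x
  · have hfst : (e (i, false)).1 = (e (i, true)).1 := (he _ _).2 rfl
    have hsnd : (e (i, false)).2 ≠ (e (i, true)).2 := fun h =>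
      Bool.false_ne_true (congrArg Prod.snd (e.injective (Prod.ext hfst h)))
    rw [Bool.eq_not_of_ne hsnd, bsgn_not, ← neg_one_mul]
    rfl
  · exact (one_mul _).symm

lemma image_fst_image [DecidableEq α] [DecidableEq β] (he : IsFibrewise e)
    (B : Finset (α × Bool)) :
    (B.image e).image Prod.fst = (B.image Prod.fst).image he.baseEquiv := by
  simp only [image_image, comp_def, he.fst_apply]

end IsFibrewise

end Fibrewise

section SignedLines

variable {α β : Type*} [DecidableEq α] [DecidableEq β]

/-- The signed lines over a family `T` of lines with signs `b`: the lifts of a line `ℓ ∈ T`, one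
signed point over each point of `ℓ`, whose signs multiply to `bsgn (b ℓ)`. -/
def signedLines (T : Finset (Finset α)) (b : Finset α → Bool) : Set (Finset (α × Bool)) :=
  {B | Set.InjOn Prod.fst (B : Set (α × Bool)) ∧ B.image Prod.fst ∈ T ∧
    ∏ x ∈ B, bsgn x.2 = bsgn (b (B.image Prod.fst))}

variable {T : Finset (Finset α)} {b : Finset α → Bool} {T' : Finset (Finset β)}
  {b' : Finset β → Bool}

lemma exists_mem_signedLines (b : Finset α → Bool) {ℓ : Finset α} (hℓ : ℓ ∈ T) (hcard : 2 < #ℓ)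
    {x y : α × Bool} (hxy : x.1 ≠ y.1) (hx : x.1 ∈ ℓ) (hy : y.1 ∈ ℓ) :
    ∃ B ∈ signedLines T b, B.image Prod.fst = ℓ ∧ x ∈ B ∧ y ∈ B := by
  obtain ⟨σ, hσx, hσy, hσ⟩ := exists_prod_bsgn_eq hcard hxy x.2 y.2 (b ℓ)
  let toSigned : α → α × Bool := fun i => (i, σ i)
  have hfst : (ℓ.image toSigned).image Prod.fst = ℓ := by
    simp only [image_image, comp_def, toSigned, image_id']
  have hprod : ∏ z ∈ ℓ.image toSigned, bsgn z.2 = ∏ i ∈ ℓ, bsgn (σ i) :=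
    prod_image fun i _ j _ h => congrArg Prod.fst h
  refine ⟨ℓ.image toSigned, ⟨?_, ?_, ?_⟩, hfst, ?_, ?_⟩
  · rw [coe_image]
    rintro _ ⟨i, -, rfl⟩ _ ⟨j, -, rfl⟩ h
    exact congrArg toSigned h
  · rwa [hfst]
  · rw [hprod, hσ, hfst]
  · exact mem_image.2 ⟨x.1, hx, Prod.ext rfl hσx⟩
  · exact mem_image.2 ⟨y.1, hy, Prod.ext rfl hσy⟩

lemma collinearityGraph_signedLines (hT : ∀ ℓ ∈ T, 2 < #ℓ) (b : Finset α → Bool) :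
    collinearityGraph (signedLines T b) =
      (collinearityGraph (T : Set (Finset α))).comap Prod.fst := by
  ext x y
  constructor
  · rintro ⟨hne, B, ⟨hinj, hBT, -⟩, hx, hy⟩
    exact ⟨hinj.ne hx hy hne, _, hBT, mem_image_of_mem _ hx, mem_image_of_mem _ hy⟩
  · rintro ⟨hne, ℓ, hℓ, hx, hy⟩
    obtain ⟨B, hB, -, hxB, hyB⟩ := exists_mem_signedLines b hℓ (hT ℓ hℓ) hne hx hy
    exact ⟨fun h => hne (congrArg Prod.fst h), B, hB, hxB, hyB⟩

namespace IsCollineation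

variable {e : α × Bool ≃ β × Bool}

lemma isFibrewise (he : IsCollineation (signedLines T b) (signedLines T' b') e)
    (hT : ∀ ℓ ∈ T, 2 < #ℓ) (hT' : ∀ ℓ ∈ T', 2 < #ℓ)
    (hinj : Injective (collinearityGraph (T : Set (Finset α))).neighborSet)
    (hinj' : Injective (collinearityGraph (T' : Set (Finset β))).neighborSet) :
    IsFibrewise e := fun x y => by
  rw [← neighborSet_comap_eq_iff hinj' Prod.fst_surjective,
    ← neighborSet_comap_eq_iff hinj Prod.fst_surjective,
    ← collinearityGraph_signedLines hT' b', ← collinearityGraph_signedLines hT b,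
    he.neighborSet_apply_eq_iff]

lemma image_baseEquiv (he : IsCollineation (signedLines T b) (signedLines T' b') e)
    (hfib : IsFibrewise e) {ℓ : Finset α} (hℓ : ℓ ∈ T) (hcard : 2 < #ℓ) :
    ℓ.image hfib.baseEquiv ∈ T' ∧
      bsgn (b' (ℓ.image hfib.baseEquiv)) = bsgn (b ℓ) * ∏ i ∈ ℓ, bsgn (e (i, true)).2 := by
  obtain ⟨i, hi, j, hj, hij⟩ := one_lt_card.1 (one_lt_two.trans hcard)
  obtain ⟨B, hB, rfl, -⟩ :=
    exists_mem_signedLines (x := (i, true)) (y := (j, true)) b hℓ hcard hij hi hj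
  obtain ⟨-, hmem, hsign⟩ := he.image_mem B hB
  rw [hfib.image_fst_image] at hmem hsign
  refine ⟨hmem, ?_⟩
  calc bsgn (b' ((B.image Prod.fst).image hfib.baseEquiv))
      = ∏ x ∈ B, bsgn (e x).2 := by rw [← hsign, Finset.prod_image e.injective.injOn]
    _ = (∏ x ∈ B, bsgn x.2) * ∏ x ∈ B, bsgn (e (x.1, true)).2 := by
      rw [← prod_mul_distrib]
      exact prod_congr rfl fun x _ => hfib.bsgn_snd_apply x
    _ = bsgn (b (B.image Prod.fst)) * ∏ i ∈ B.image Prod.fst, bsgn (e (i, true)).2 := by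
      rw [hB.2.2, Finset.prod_image hB.1]

lemma baseEquiv (he : IsCollineation (signedLines T b) (signedLines T' b') e)
    (hfib : IsFibrewise e) (hT : ∀ ℓ ∈ T, 2 < #ℓ) (hT' : ∀ ℓ ∈ T', 2 < #ℓ) :
    IsCollineation (T : Set (Finset α)) T' hfib.baseEquiv where
  image_mem ℓ hℓ := (he.image_baseEquiv hfib hℓ (hT ℓ hℓ)).1
  image_symm_mem ℓ hℓ := (he.symm.image_baseEquiv hfib.symm hℓ (hT' ℓ hℓ)).1

theorem prod_bsgn_eq (he : IsCollineation (signedLines T b) (signedLines T' b') e)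
    (hT : ∀ ℓ ∈ T, 2 < #ℓ) (hT' : ∀ ℓ ∈ T', 2 < #ℓ)
    (hinj : Injective (collinearityGraph (T : Set (Finset α))).neighborSet)
    (hinj' : Injective (collinearityGraph (T' : Set (Finset β))).neighborSet)
    (heven : ∀ i, Even #{ℓ ∈ T | i ∈ ℓ}) :
    ∏ ℓ ∈ T, bsgn (b ℓ) = ∏ ℓ ∈ T', bsgn (b' ℓ) := by
  have hfib : IsFibrewise e := he.isFibrewise hT hT' hinj hinj'
  symm
  calc ∏ ℓ ∈ T', bsgn (b' ℓ)
      = ∏ ℓ ∈ T, bsgn (b' (ℓ.image hfib.baseEquiv)) :=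
        ((he.baseEquiv hfib hT hT').prod_image _).symm
    _ = ∏ ℓ ∈ T, bsgn (b ℓ) * ∏ i ∈ ℓ, bsgn (e (i, true)).2 :=
        prod_congr rfl fun ℓ hℓ => (he.image_baseEquiv hfib hℓ (hT ℓ hℓ)).2
    _ = ∏ ℓ ∈ T, bsgn (b ℓ) := by
        rw [prod_mul_distrib, prod_prod_eq_one_of_even heven fun i => bsgn_sq _, mul_one]

end IsCollineation

end SignedLines

section SignedMatroid

variable {α β : Type*} [Fintype α] [DecidableEq α] [Fintype β] [DecidableEq β]

open Classical in
/-- The pre-matroid on the signed points whose bases are the `r`-subsets that are not signed lines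
over `T` with signs `b`; for `T = rowcol` and `r = 3` it specializes to `P` and `Q`. -/
noncomputable def signedMatroid (r : ℕ) (T : Finset (Finset α)) (b : Finset α → Bool) :
    PreMatroid (α × Bool) :=
  ⟨univ, (powersetCard r univ).filter (· ∉ signedLines T b)⟩

variable {r : ℕ} {T : Finset (Finset α)} {b : Finset α → Bool} {T' : Finset (Finset β)}
  {b' : Finset β → Bool}

lemma mem_bases_signedMatroid {B : Finset (α × Bool)} :
    B ∈ (signedMatroid r T b).bases ↔ #B = r ∧ B ∉ signedLines T b := by
  simp only [signedMatroid, mem_filter, mem_powersetCard_univ]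

lemma mem_signedLines_iff (hT : (T : Set (Finset α)).Sized r) {B : Finset (α × Bool)} :
    B ∈ signedLines T b ↔ #B = r ∧ B ∉ (signedMatroid r T b).bases := by
  have hcard : B ∈ signedLines T b → #B = r := fun hB =>
    (card_image_of_injOn hB.1).symm.trans (hT hB.2.1)
  rw [mem_bases_signedMatroid]
  tauto

lemma exists_isCollineation_of_iso (hT : (T : Set (Finset α)).Sized r)
    (hT' : (T' : Set (Finset β)).Sized r) (h : (signedMatroid r T b).Iso (signedMatroid r T' b')) :
    ∃ e, IsCollineation (signedLines T b) (signedLines T' b') e := by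
  obtain ⟨φ, hφ, hbases⟩ := h
  have hbij : Bijective φ := by
    rwa [signedMatroid, signedMatroid, coe_univ, coe_univ, Set.bijOn_univ] at hφ
  let e : α × Bool ≃ β × Bool := Equiv.ofBijective φ hbij
  have hlines (B : Finset (α × Bool)) : B.image e ∈ signedLines T' b' ↔ B ∈ signedLines T b := by
    rw [mem_signedLines_iff hT, mem_signedLines_iff hT', hbases B (subset_univ B),
      card_image_of_injective B e.injective]
    rfl
  refine ⟨e, fun B hB => (hlines B).2 hB, fun B hB => (hlines _).1 ?_⟩
  rwa [image_image, e.self_comp_symm, image_id]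

theorem stmt6_general (hr : 2 < r) (hT : (T : Set (Finset α)).Sized r)
    (hT' : (T' : Set (Finset β)).Sized r)
    (hinj : Injective (collinearityGraph (T : Set (Finset α))).neighborSet)
    (hinj' : Injective (collinearityGraph (T' : Set (Finset β))).neighborSet)
    (heven : ∀ i, Even #{ℓ ∈ T | i ∈ ℓ}) (hb : ∏ ℓ ∈ T, bsgn (b ℓ) ≠ ∏ ℓ ∈ T', bsgn (b' ℓ)) :
    ¬ (signedMatroid r T b).Iso (signedMatroid r T' b') := fun h => by
  obtain ⟨e, he⟩ := exists_isCollineation_of_iso hT hT' h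
  exact hb (he.prod_bsgn_eq (fun ℓ hℓ => (hT hℓ).symm ▸ hr) (fun ℓ hℓ => (hT' hℓ).symm ▸ hr)
    hinj hinj' heven)

end SignedMatroid

lemma sized_rowcol : (rowcol : Set (Finset (Fin 9))).Sized 3 := by
  have h : ∀ ℓ ∈ rowcol, #ℓ = 3 := by decide +kernel
  exact h

lemma even_card_filter_mem_rowcol : ∀ i, Even #{ℓ ∈ rowcol | i ∈ ℓ} := by decide

lemma neighborSet_collinearityGraph_rowcol_injective :
    Injective (collinearityGraph (rowcol : Set (Finset (Fin 9)))).neighborSet := by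
  have twin_free : ∀ i j : Fin 9,
      (∀ k, (i ≠ k ∧ ∃ ℓ ∈ rowcol, i ∈ ℓ ∧ k ∈ ℓ) ↔ (j ≠ k ∧ ∃ ℓ ∈ rowcol, j ∈ ℓ ∧ k ∈ ℓ)) →
        i = j := by decide +kernel
  exact fun i j hij => twin_free i j (Set.ext_iff.1 hij)

lemma mem_signedLines_rowcol {b : Finset (Fin 9) → Bool} {B : Finset (Fin 9 × Bool)}
    (hB : #B = 3) :
    B ∈ signedLines rowcol b ↔
      B.image Prod.fst ∈ rowcol ∧ ∏ x ∈ B, bsgn x.2 = bsgn (b (B.image Prod.fst)) :=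
  and_iff_right_of_imp fun h => card_image_iff.1 ((sized_rowcol h.1).trans hB.symm)

lemma matP_eq_signedMatroid : matP = signedMatroid 3 rowcol fun _ => true := by
  classical
  refine congrArg (PreMatroid.mk univ) (filter_congr fun B hB => ?_)
  rw [mem_signedLines_rowcol (mem_powersetCard.1 hB).2]
  rfl

lemma matQ_eq_signedMatroid : matQ = signedMatroid 3 rowcol fun ℓ => ℓ ≠ {6, 7, 8} := by
  classical
  refine congrArg (PreMatroid.mk univ) (filter_congr fun B hB => ?_)
  rw [mem_signedLines_rowcol (mem_powersetCard.1 hB).2]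
  have hrow : {6, 7, 8} ∈ rowcol := by decide
  by_cases h : B.image Prod.fst = {6, 7, 8} <;> simp [h, hrow, bsgn]

theorem stmt6 : ¬ matP.Iso matQ := by
  rw [matP_eq_signedMatroid, matQ_eq_signedMatroid]
  exact stmt6_general (by decide) sized_rowcol sized_rowcol
    neighborSet_collinearityGraph_rowcol_injective neighborSet_collinearityGraph_rowcol_injective
    even_card_filter_mem_rowcol (by decide)

end MatroidGame
end

section
/- There is no 9-element subset X of E such that the restriction P|X is isomorphic to the matroid N₀, where N₀ is the rank-3 matroid on {1,…,9} whose bases are all 3-element subsets except {1,2,3}, {4,5,6}, and {7,8,9}. -/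
open scoped BigOperators TensorProduct

namespace MatroidGame

open PreMatroid

/-- The rank-3 matroid `N₀` on `{1,…,9}` with nonbases `{1,2,3}, {4,5,6}, {7,8,9}`. -/
def matN0 : PreMatroid (Fin 9) :=
  ⟨Finset.univ,
    ((Finset.univ : Finset (Fin 9)).powersetCard 3).filter fun B =>
      B ≠ {0, 1, 2} ∧ B ≠ {3, 4, 5} ∧ B ≠ {6, 7, 8}⟩

/-! A nonbasis of `P` is a lift of a grid line along signs of product `1`. Lines have odd size, so
two lifts of the same line cannot be disjoint: their signs would be opposite throughout, and their
products would differ. Hence three pairwise disjoint nonbases lie over three different lines.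

If these are the three rows, their signs fit together to signs on the whole grid with product `1`,
so the product along some column is `1` as well, and that column lifts to a fourth nonbasis inside
their union. If they are, say, two rows and a column, then at each of the two crossing points the
union contains both signs, and flipping the signs of the column at both points gives a fourth
nonbasis. In contrast, `N₀` has exactly three nonbases, and they are pairwise disjoint. -/

namespace PreMatroid

/-- The nonbases of a matroid of rank `r`: the `r`-element subsets of the ground set that are not
bases. The rank is passed explicitly instead of being computed from `M`. -/
def nonbases {α : Type*} [DecidableEq α] (M : PreMatroid α) (r : ℕ) : Finset (Finset α) :=
  (M.E.powersetCard r).filter (· ∉ M.bases)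

section Nonbases

variable {α β : Type*} [DecidableEq α] [DecidableEq β] {M : PreMatroid α} {N : PreMatroid β}
  {r : ℕ} {D X : Finset α} {φ : α → β}

theorem mem_nonbases : D ∈ M.nonbases r ↔ D ⊆ M.E ∧ D.card = r ∧ D ∉ M.bases := by
  simp only [nonbases, Finset.mem_filter, Finset.mem_powersetCard, and_assoc]

theorem mem_bases_restrict (hM : ∀ B ∈ M.bases, B.card = r) (hDX : D ⊆ X) (hD : D.card = r) :
    D ∈ (M.restrict X).bases ↔ D ∈ M.bases := by
  have mem_of_indep {I : Finset α} (hI : M.Indep I) (hDI : D ⊆ I) : D ∈ M.bases ∧ I = D := by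
    obtain ⟨B, hB, hIB⟩ := hI
    have hDB : D = B := Finset.eq_of_subset_of_card_le (hDI.trans hIB) (by rw [hM B hB, hD])
    subst hDB
    exact ⟨hB, hIB.antisymm hDI⟩
  simp only [restrict, Finset.mem_filter, Finset.mem_powerset]
  exact ⟨fun h => (mem_of_indep h.2.1 subset_rfl).1,
    fun h => ⟨hDX, ⟨D, h, subset_rfl⟩, fun I _ hI hDI => (mem_of_indep hI hDI).2⟩⟩

theorem mem_nonbases_restrict (hM : ∀ B ∈ M.bases, B.card = r) (hX : X ⊆ M.E) :
    D ∈ (M.restrict X).nonbases r ↔ D ∈ M.nonbases r ∧ D ⊆ X := by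
  rw [mem_nonbases, mem_nonbases]
  constructor
  · rintro ⟨hDX, hD, hmem⟩
    exact ⟨⟨hDX.trans hX, hD, mt (mem_bases_restrict hM hDX hD).2 hmem⟩, hDX⟩
  · rintro ⟨⟨-, hD, hmem⟩, hDX⟩
    exact ⟨hDX, hD, mt (mem_bases_restrict hM hDX hD).1 hmem⟩

theorem IsIsoMap.bijOn_nonbases (h : M.IsIsoMap N φ) (r : ℕ) :
    Set.BijOn (Finset.image φ) (M.nonbases r) (N.nonbases r) := by
  obtain ⟨hφ, hbases⟩ := h
  have image_ground : M.E.image φ = N.E := by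
    exact_mod_cast hφ.image_eq
  have mem_iff {D : Finset α} (hD : D ⊆ M.E) : D ∈ M.nonbases r ↔ D.image φ ∈ N.nonbases r := by
    have hsub : D.image φ ⊆ N.E := image_ground ▸ Finset.image_subset_image hD
    have hcard : (D.image φ).card = D.card :=
      Finset.card_image_of_injOn (hφ.injOn.mono (Finset.coe_subset.2 hD))
    simp only [mem_nonbases, hD, hsub, hcard, hbases D hD]
  refine ⟨fun D hD => (mem_iff (mem_nonbases.1 hD).1).1 hD, ?_, fun D' hD' => ?_⟩
  · exact (Finset.image_injOn_powerset_of_injOn hφ.injOn).mono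
      fun D hD => Finset.mem_powerset.2 (mem_nonbases.1 hD).1
  · obtain ⟨D, hD, rfl⟩ := Finset.subset_image_iff.1 (image_ground ▸ (mem_nonbases.1 hD').1)
    exact ⟨D, (mem_iff hD).2 hD', rfl⟩

theorem IsIsoMap.pairwiseDisjoint_nonbases (h : M.IsIsoMap N φ)
    (hN : (N.nonbases r : Set (Finset β)).PairwiseDisjoint id) :
    (M.nonbases r : Set (Finset α)).PairwiseDisjoint id := by
  have hbij := h.bijOn_nonbases r
  intro A hA B hB hAB
  exact (hN (hbij.mapsTo hA) (hbij.mapsTo hB) (hbij.injOn.ne hA hB hAB)).of_image_finset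

end Nonbases

end PreMatroid

theorem exists_forall_mem_eq_of_pairwiseDisjoint {α β : Type*} [Nonempty β] {𝓛 : Set (Finset α)}
    (h𝓛 : 𝓛.PairwiseDisjoint id) (f : Finset α → α → β) :
    ∃ g : α → β, ∀ L ∈ 𝓛, ∀ a ∈ L, g a = f L a := by
  have hpt (a : α) : ∃ b, ∀ L ∈ 𝓛, a ∈ L → b = f L a := by
    by_cases ha : ∃ L ∈ 𝓛, a ∈ L
    · obtain ⟨L, hL, haL⟩ := ha
      exact ⟨f L a, fun L' hL' haL' => by rw [h𝓛.elim_finset hL hL' a haL haL']⟩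
    · exact ⟨Classical.arbitrary β, fun L hL haL => absurd ⟨L, hL, haL⟩ ha⟩
  choose g hg using hpt
  exact ⟨g, fun L hL a haL => hg a L hL haL⟩

theorem notMem_of_not_disjoint_of_not_disjoint {β : Type*} [PartialOrder β] [OrderBot β]
    {s : Set β} (hs : s.PairwiseDisjoint id) {a b d : β} (ha : a ∈ s) (hb : b ∈ s) (hab : a ≠ b)
    (had : ¬Disjoint a d) (hbd : ¬Disjoint b d) : d ∉ s := fun hd =>
  hab ((hs.elim ha hd had).trans (hs.elim hb hd hbd).symm)

section SignedLifts

variable {α : Type*} {K L M S : Finset α} {σ τ : α → Bool} {a : α}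

/-- The product of the signs `σ` over `L`. -/
def signProd (σ : α → Bool) (L : Finset α) : ℤ := ∏ a ∈ L, bsgn (σ a)

theorem signProd_eq_one_or_neg_one (σ : α → Bool) (L : Finset α) :
    signProd σ L = 1 ∨ signProd σ L = -1 := by
  rw [← Int.isUnit_iff, signProd, IsUnit.prod_iff]
  intro a _
  cases σ a <;> simp [bsgn]

variable [DecidableEq α]

theorem signProd_biUnion {𝓛 : Finset (Finset α)} (h𝓛 : (𝓛 : Set (Finset α)).PairwiseDisjoint id)
    (σ : α → Bool) : signProd σ (𝓛.biUnion id) = ∏ L ∈ 𝓛, signProd σ L :=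
  Finset.prod_biUnion h𝓛

/-- The signs `σ`, reversed at the points of `S`. -/
def flipOn (S : Finset α) (σ : α → Bool) (a : α) : Bool := if a ∈ S then !σ a else σ a

theorem flipOn_of_mem (σ : α → Bool) (ha : a ∈ S) : flipOn S σ a = !σ a := if_pos ha

theorem flipOn_of_notMem (σ : α → Bool) (ha : a ∉ S) : flipOn S σ a = σ a := if_neg ha

theorem signProd_flipOn (S L : Finset α) (σ : α → Bool) :
    signProd (flipOn S σ) L = (-1) ^ (L ∩ S).card * signProd σ L := by
  have bsgn_flipOn (a : α) : bsgn (flipOn S σ a) = (if a ∈ S then -1 else 1) * bsgn (σ a) := by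
    unfold flipOn
    split_ifs <;> cases σ a <;> rfl
  simp only [signProd, bsgn_flipOn, Finset.prod_mul_distrib, Finset.prod_ite_mem,
    Finset.prod_const]

/-- The lift of `L` to a set of signed points, in which each `a ∈ L` carries the sign `σ a`. -/
def signedLift (σ : α → Bool) (L : Finset α) : Finset (α × Bool) := L.image fun a => (a, σ a)

theorem mem_signedLift {x : α × Bool} : x ∈ signedLift σ L ↔ x.1 ∈ L ∧ σ x.1 = x.2 := by
  obtain ⟨a, s⟩ := x
  simp [signedLift]

theorem mk_mem_signedLift (σ : α → Bool) (ha : a ∈ L) : (a, σ a) ∈ signedLift σ L :=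
  Finset.mem_image_of_mem _ ha

theorem signedLift_congr (h : ∀ a ∈ L, σ a = τ a) : signedLift σ L = signedLift τ L :=
  Finset.image_congr fun a ha => by rw [h a ha]

theorem image_fst_signedLift (σ : α → Bool) (L : Finset α) :
    (signedLift σ L).image Prod.fst = L := by
  simp [signedLift, Finset.image_image, Function.comp_def]

theorem card_signedLift (σ : α → Bool) (L : Finset α) : (signedLift σ L).card = L.card :=
  Finset.card_image_of_injective L fun _ _ h => congrArg Prod.fst h

theorem prod_signedLift (σ : α → Bool) (L : Finset α) :
    ∏ x ∈ signedLift σ L, bsgn x.2 = signProd σ L :=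
  Finset.prod_image fun _ _ _ _ h => congrArg Prod.fst h

theorem eq_signedLift_of_injOn {D : Finset (α × Bool)}
    (hD : Set.InjOn Prod.fst (D : Set (α × Bool))) :
    D = signedLift (fun a => decide ((a, true) ∈ D)) (D.image Prod.fst) := by
  refine Finset.eq_of_subset_of_card_le (fun x hx => ?_) ?_
  · obtain ⟨a, s⟩ := x
    refine mem_signedLift.2 ⟨Finset.mem_image_of_mem _ hx, ?_⟩
    cases s
    · exact decide_eq_false fun hx' => Bool.false_ne_true (congrArg Prod.snd (hD hx hx' rfl))
    · exact decide_eq_true hx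
  · rw [card_signedLift, Finset.card_image_of_injOn hD]

theorem eq_not_of_disjoint_signedLift (h : Disjoint (signedLift σ K) (signedLift τ L))
    (haK : a ∈ K) (haL : a ∈ L) : σ a = !τ a :=
  Bool.eq_not.2 fun hστ => Finset.disjoint_left.1 h (mk_mem_signedLift σ haK)
    (hστ ▸ mk_mem_signedLift τ haL)

theorem not_disjoint_signedLift (hK : a ∈ K) (hL : a ∈ L) (h : σ a = τ a) :
    ¬Disjoint (signedLift σ K) (signedLift τ L) :=
  Finset.not_disjoint_iff.2 ⟨(a, σ a), mk_mem_signedLift σ hK, h ▸ mk_mem_signedLift τ hL⟩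

/-- `D` is a lift of `L` along signs of product `1`; the nonbases of `matP` are the sets of this
kind with `L` a row or a column. -/
def IsPositiveLift (L : Finset α) (D : Finset (α × Bool)) : Prop :=
  ∃ σ, signProd σ L = 1 ∧ D = signedLift σ L

section IsPositiveLift

variable {A B C D : Finset (α × Bool)}

theorem IsPositiveLift.image_fst (h : IsPositiveLift L D) : D.image Prod.fst = L := by
  obtain ⟨σ, -, rfl⟩ := h
  exact image_fst_signedLift σ L

theorem isPositiveLift_iff : IsPositiveLift L D ↔
    D.image Prod.fst = L ∧ D.card = L.card ∧ ∏ x ∈ D, bsgn x.2 = 1 := by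
  constructor
  · rintro ⟨σ, hσ, rfl⟩
    exact ⟨image_fst_signedLift σ L, card_signedLift σ L, by rw [prod_signedLift, hσ]⟩
  · rintro ⟨rfl, hcard, hprod⟩
    have hD := eq_signedLift_of_injOn (Finset.injOn_of_card_image_eq hcard.symm)
    exact ⟨_, by rw [← prod_signedLift, ← hD, hprod], hD⟩

theorem IsPositiveLift.not_disjoint (hL : Odd L.card) (hA : IsPositiveLift L A)
    (hB : IsPositiveLift L B) : ¬Disjoint A B := by
  obtain ⟨σ, hσ, rfl⟩ := hA
  obtain ⟨τ, hτ, rfl⟩ := hB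
  intro hdisj
  have hflip : signProd σ L = signProd (flipOn L τ) L :=
    Finset.prod_congr rfl fun a ha => by
      rw [eq_not_of_disjoint_signedLift hdisj ha ha, flipOn_of_mem τ ha]
  rw [signProd_flipOn, Finset.inter_self, hL.neg_one_pow, hσ, hτ] at hflip
  norm_num at hflip

theorem IsPositiveLift.exists_of_two_crossings (hA : IsPositiveLift K A) (hB : IsPositiveLift M B)
    (hC : IsPositiveLift L C) (hAC : Disjoint A C) (hBC : Disjoint B C) (hKM : Disjoint K M)
    (hKL : (K ∩ L).Nonempty) (hML : (M ∩ L).Nonempty) :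
    ∃ D, IsPositiveLift L D ∧ D ⊆ A ∪ B ∪ C ∧ ¬Disjoint A D ∧ ¬Disjoint B D := by
  obtain ⟨ρ, -, rfl⟩ := hA
  obtain ⟨τ, -, rfl⟩ := hB
  obtain ⟨σ, hσ, rfl⟩ := hC
  obtain ⟨p, hp⟩ := hKL
  obtain ⟨q, hq⟩ := hML
  rw [Finset.mem_inter] at hp hq
  have hpq : p ≠ q := Finset.disjoint_iff_ne.1 hKM p hp.1 q hq.1
  set σ' := flipOn {p, q} σ with hσ'
  have hp' : ρ p = σ' p := by
    rw [hσ', flipOn_of_mem σ (by simp), eq_not_of_disjoint_signedLift hAC hp.1 hp.2]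
  have hq' : τ q = σ' q := by
    rw [hσ', flipOn_of_mem σ (by simp), eq_not_of_disjoint_signedLift hBC hq.1 hq.2]
  have hinter : L ∩ {p, q} = {p, q} := by
    simp [hp.2, hq.2]
  refine ⟨signedLift σ' L, ⟨σ', ?_, rfl⟩, ?_, not_disjoint_signedLift hp.1 hp.2 hp',
    not_disjoint_signedLift hq.1 hq.2 hq'⟩
  · rw [signProd_flipOn, hinter, Finset.card_pair hpq, hσ]
    norm_num
  · refine Finset.image_subset_iff.2 fun a ha => ?_
    by_cases hap : a = p
    · subst hap
      exact Finset.mem_union_left _ (Finset.mem_union_left _ (hp' ▸ mk_mem_signedLift ρ hp.1))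
    by_cases haq : a = q
    · subst haq
      exact Finset.mem_union_left _ (Finset.mem_union_right _ (hq' ▸ mk_mem_signedLift τ hq.1))
    rw [hσ', flipOn_of_notMem σ (by simp [hap, haq])]
    exact Finset.mem_union_right _ (mk_mem_signedLift σ ha)

end IsPositiveLift

end SignedLifts

section Grids

variable {α : Type*} [DecidableEq α] {𝓡 𝓒 : Finset (Finset α)}
  {𝒜 : Finset (Finset (α × Bool))}

/-- Besides the members of `𝒜`, the union of `𝒜` contains a further positive lift of a line in
`𝓛`. -/
def HasExtraLift (𝓛 : Finset (Finset α)) (𝒜 : Finset (Finset (α × Bool))) : Prop :=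
  ∃ D ∉ 𝒜, D ⊆ 𝒜.biUnion id ∧ ∃ L ∈ 𝓛, IsPositiveLift L D

theorem HasExtraLift.mono {𝓛 𝓛' : Finset (Finset α)} (h𝓛 : 𝓛 ⊆ 𝓛') (h : HasExtraLift 𝓛 𝒜) :
    HasExtraLift 𝓛' 𝒜 := by
  obtain ⟨D, hD, hsub, L, hL, hLD⟩ := h
  exact ⟨D, hD, hsub, L, h𝓛 hL, hLD⟩

/-- The rows `𝓡` and the columns `𝓒` of a grid: two families of pairwise disjoint lines that cover
the same points, such that every row meets every column. -/
structure IsGrid (𝓡 𝓒 : Finset (Finset α)) : Prop where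
  disjoint_rows : (𝓡 : Set (Finset α)).PairwiseDisjoint id
  disjoint_cols : (𝓒 : Set (Finset α)).PairwiseDisjoint id
  biUnion_eq : 𝓡.biUnion id = 𝓒.biUnion id
  meet : ∀ R ∈ 𝓡, ∀ C ∈ 𝓒, (R ∩ C).Nonempty

theorem IsGrid.symm (h : IsGrid 𝓡 𝓒) : IsGrid 𝓒 𝓡 where
  disjoint_rows := h.disjoint_cols
  disjoint_cols := h.disjoint_rows
  biUnion_eq := h.biUnion_eq.symm
  meet C hC R hR := Finset.inter_comm R C ▸ h.meet R hR C hC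

theorem IsGrid.exists_signProd_col_eq_one (h : IsGrid 𝓡 𝓒) (h𝓒 : Odd 𝓒.card) {σ : α → Bool}
    (hσ : ∀ R ∈ 𝓡, signProd σ R = 1) : ∃ C ∈ 𝓒, signProd σ C = 1 := by
  by_contra! hne
  have hneg : ∀ C ∈ 𝓒, signProd σ C = -1 := fun C hC =>
    (signProd_eq_one_or_neg_one σ C).resolve_left (hne C hC)
  have hcontra : (1 : ℤ) = -1 := calc
    1 = ∏ R ∈ 𝓡, signProd σ R := (Finset.prod_eq_one hσ).symm
    _ = ∏ C ∈ 𝓒, signProd σ C := by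
      rw [← signProd_biUnion h.disjoint_rows, h.biUnion_eq, signProd_biUnion h.disjoint_cols]
    _ = -1 := by rw [Finset.prod_congr rfl hneg, Finset.prod_const, h𝓒.neg_one_pow]
  norm_num at hcontra

theorem IsGrid.hasExtraLift_of_all_rows (h : IsGrid 𝓡 𝓒) (h𝓡 : 1 < 𝓡.card) (h𝓒 : Odd 𝓒.card)
    (h𝒜 : (𝒜 : Set (Finset (α × Bool))).PairwiseDisjoint id)
    (hrows : ∀ R ∈ 𝓡, ∃ A ∈ 𝒜, IsPositiveLift R A) :
    HasExtraLift 𝓒 𝒜 := by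
  have hsigns (R : Finset α) : ∃ s, R ∈ 𝓡 → signProd s R = 1 ∧ signedLift s R ∈ 𝒜 := by
    by_cases hR : R ∈ 𝓡
    · obtain ⟨_, hA, s, hs, rfl⟩ := hrows R hR
      exact ⟨s, fun _ => ⟨hs, hA⟩⟩
    · exact ⟨fun _ => true, fun hR' => absurd hR' hR⟩
  choose s hs using hsigns
  obtain ⟨σ, hσ⟩ := exists_forall_mem_eq_of_pairwiseDisjoint h.disjoint_rows s
  have hprod : ∀ R ∈ 𝓡, signProd σ R = 1 := fun R hR =>
    (Finset.prod_congr rfl fun a ha => by rw [hσ R hR a ha]).trans (hs R hR).1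
  have hlift : ∀ R ∈ 𝓡, signedLift σ R ∈ 𝒜 := fun R hR =>
    signedLift_congr (hσ R hR) ▸ (hs R hR).2
  obtain ⟨C, hC, hC1⟩ := h.exists_signProd_col_eq_one h𝓒 hprod
  have hmeet : ∀ R ∈ 𝓡, ¬Disjoint (signedLift σ R) (signedLift σ C) := fun R hR => by
    obtain ⟨p, hp⟩ := h.meet R hR C hC
    exact not_disjoint_signedLift (Finset.mem_inter.1 hp).1 (Finset.mem_inter.1 hp).2 rfl
  obtain ⟨R, hR, R', hR', hne⟩ := Finset.one_lt_card.1 h𝓡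
  have hlift_ne : signedLift σ R ≠ signedLift σ R' := fun heq => hne <| by
    rw [← image_fst_signedLift σ R, heq, image_fst_signedLift]
  refine ⟨signedLift σ C, notMem_of_not_disjoint_of_not_disjoint h𝒜 (hlift R hR) (hlift R' hR')
    hlift_ne (hmeet R hR) (hmeet R' hR'), Finset.image_subset_iff.2 fun a ha => ?_,
    C, hC, σ, hC1, rfl⟩
  have haC : a ∈ 𝓡.biUnion id := h.biUnion_eq ▸ Finset.mem_biUnion.2 ⟨C, hC, ha⟩
  obtain ⟨S, hS, haS⟩ := Finset.mem_biUnion.1 haC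
  exact Finset.mem_biUnion.2 ⟨_, hlift S hS, mk_mem_signedLift σ haS⟩

theorem IsGrid.hasExtraLift_of_two_rows (h : IsGrid 𝓡 𝓒)
    (h𝒜 : (𝒜 : Set (Finset (α × Bool))).PairwiseDisjoint id) {A B C : Finset (α × Bool)}
    (hA : A ∈ 𝒜) (hB : B ∈ 𝒜) (hC : C ∈ 𝒜) (hAC : A ≠ C) (hBC : B ≠ C)
    {K M L : Finset α} (hK : K ∈ 𝓡) (hM : M ∈ 𝓡) (hL : L ∈ 𝓒) (hKM : K ≠ M)
    (hKA : IsPositiveLift K A) (hMB : IsPositiveLift M B) (hLC : IsPositiveLift L C) :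
    HasExtraLift 𝓒 𝒜 := by
  have hAB : A ≠ B := fun heq => hKM <| by rw [← hKA.image_fst, heq, hMB.image_fst]
  obtain ⟨D, hD, hsub, hAD, hBD⟩ := hKA.exists_of_two_crossings hMB hLC (h𝒜 hA hC hAC)
    (h𝒜 hB hC hBC) (h.disjoint_rows hK hM hKM) (h.meet K hK L hL) (h.meet M hM L hL)
  refine ⟨D, notMem_of_not_disjoint_of_not_disjoint h𝒜 hA hB hAB hAD hBD, hsub.trans ?_, L, hL, hD⟩
  exact Finset.union_subset (Finset.union_subset (Finset.subset_biUnion_of_mem id hA)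
    (Finset.subset_biUnion_of_mem id hB)) (Finset.subset_biUnion_of_mem id hC)

theorem injOn_image_fst_of_isPositiveLift
    (h𝒜 : (𝒜 : Set (Finset (α × Bool))).PairwiseDisjoint id)
    (hodd : ∀ A ∈ 𝒜, Odd (A.image Prod.fst).card)
    (hlift : ∀ A ∈ 𝒜, IsPositiveLift (A.image Prod.fst) A) :
    Set.InjOn (Finset.image Prod.fst) (𝒜 : Set (Finset (α × Bool))) := fun A hA B hB heq =>
  h𝒜.elim hA hB ((hlift A hA).not_disjoint (hodd A hA) (heq ▸ hlift B hB))

theorem forall_exists_isPositiveLift {𝓛 : Finset (Finset α)}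
    (hinj : Set.InjOn (Finset.image Prod.fst) (𝒜 : Set (Finset (α × Bool))))
    (hcard : 𝓛.card ≤ 𝒜.card)
    (hlift : ∀ A ∈ 𝒜, A.image Prod.fst ∈ 𝓛 ∧ IsPositiveLift (A.image Prod.fst) A) :
    ∀ L ∈ 𝓛, ∃ A ∈ 𝒜, IsPositiveLift L A := by
  intro L hL
  obtain ⟨A, hA, rfl⟩ :=
    Finset.surjOn_of_injOn_of_card_le _ (fun A hA => (hlift A hA).1) hinj hcard hL
  exact ⟨A, hA, (hlift A hA).2⟩

theorem IsGrid.hasExtraLift_of_mixed (h : IsGrid 𝓡 𝓒)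
    (h𝒜 : (𝒜 : Set (Finset (α × Bool))).PairwiseDisjoint id) (hcard : 2 < 𝒜.card)
    (hinj : Set.InjOn (Finset.image Prod.fst) (𝒜 : Set (Finset (α × Bool))))
    (hlift : ∀ A ∈ 𝒜, A.image Prod.fst ∈ 𝓡 ∪ 𝓒 ∧ IsPositiveLift (A.image Prod.fst) A)
    (hrows : ∃ C ∈ 𝒜, C.image Prod.fst ∉ 𝓡) (hcols : ∃ A ∈ 𝒜, A.image Prod.fst ∉ 𝓒) :
    HasExtraLift (𝓡 ∪ 𝓒) 𝒜 := by
  obtain ⟨C, hC, hC𝓡⟩ := hrows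
  obtain ⟨A, hA, hA𝓒⟩ := hcols
  have hC𝓒 := (Finset.mem_union.1 (hlift C hC).1).resolve_left hC𝓡
  have hA𝓡 := (Finset.mem_union.1 (hlift A hA).1).resolve_right hA𝓒
  have hAC : A ≠ C := fun heq => hC𝓡 (heq ▸ hA𝓡)
  obtain ⟨B, hB, hBAC⟩ := Finset.exists_mem_notMem_of_card_lt_card
    (Finset.card_le_two.trans_lt hcard : ({A, C} : Finset _).card < 𝒜.card)
  obtain ⟨hBA, hBC⟩ : B ≠ A ∧ B ≠ C := by simpa using hBAC
  rcases Finset.mem_union.1 (hlift B hB).1 with hB𝓡 | hB𝓒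
  · exact (h.hasExtraLift_of_two_rows h𝒜 hA hB hC hAC hBC hA𝓡 hB𝓡 hC𝓒 (hinj.ne hA hB hBA.symm)
      (hlift A hA).2 (hlift B hB).2 (hlift C hC).2).mono Finset.subset_union_right
  · exact (h.symm.hasExtraLift_of_two_rows h𝒜 hC hB hA hAC.symm hBA hC𝓒 hB𝓒 hA𝓡
      (hinj.ne hC hB hBC.symm) (hlift C hC).2 (hlift B hB).2 (hlift A hA).2).mono
      Finset.subset_union_left

theorem IsGrid.hasExtraLift (h : IsGrid 𝓡 𝓒) {n : ℕ} (hn : Odd n) (hn2 : 2 < n)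
    (h𝓡 : 𝓡.card = n) (h𝓒 : 𝓒.card = n) (hodd : ∀ L ∈ 𝓡 ∪ 𝓒, Odd L.card) (hcard : 𝒜.card = n)
    (h𝒜 : (𝒜 : Set (Finset (α × Bool))).PairwiseDisjoint id)
    (hlift : ∀ A ∈ 𝒜, ∃ L ∈ 𝓡 ∪ 𝓒, IsPositiveLift L A) : HasExtraLift (𝓡 ∪ 𝓒) 𝒜 := by
  have hline : ∀ A ∈ 𝒜, A.image Prod.fst ∈ 𝓡 ∪ 𝓒 ∧ IsPositiveLift (A.image Prod.fst) A := by
    intro A hA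
    obtain ⟨L, hL, hLA⟩ := hlift A hA
    rw [hLA.image_fst]
    exact ⟨hL, hLA⟩
  have hinj := injOn_image_fst_of_isPositiveLift h𝒜 (fun A hA => hodd _ (hline A hA).1)
    fun A hA => (hline A hA).2
  have forall_lifted {𝓛 : Finset (Finset α)} (h𝓛 : 𝓛.card = n)
      (hmem : ∀ A ∈ 𝒜, A.image Prod.fst ∈ 𝓛) : ∀ L ∈ 𝓛, ∃ A ∈ 𝒜, IsPositiveLift L A :=
    forall_exists_isPositiveLift hinj (by rw [h𝓛, hcard]) fun A hA => ⟨hmem A hA, (hline A hA).2⟩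
  by_cases hrows : ∀ A ∈ 𝒜, A.image Prod.fst ∈ 𝓡
  · exact (h.hasExtraLift_of_all_rows (by omega) (h𝓒 ▸ hn) h𝒜
      (forall_lifted h𝓡 hrows)).mono Finset.subset_union_right
  by_cases hcols : ∀ A ∈ 𝒜, A.image Prod.fst ∈ 𝓒
  · exact (h.symm.hasExtraLift_of_all_rows (by omega) (h𝓡 ▸ hn) h𝒜
      (forall_lifted h𝓒 hcols)).mono Finset.subset_union_left
  push Not at hrows hcols
  exact h.hasExtraLift_of_mixed h𝒜 (hcard ▸ hn2) hinj hline hrows hcols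

end Grids

/-- The rows of the 3×3 grid; they are also the nonbases of `matN0`. -/
def gridRows : Finset (Finset (Fin 9)) := {{0, 1, 2}, {3, 4, 5}, {6, 7, 8}}

/-- The columns of the 3×3 grid. -/
def gridCols : Finset (Finset (Fin 9)) := {{0, 3, 6}, {1, 4, 7}, {2, 5, 8}}

theorem gridRows_union_gridCols : gridRows ∪ gridCols = rowcol := rfl

theorem isGrid_gridRows_gridCols : IsGrid gridRows gridCols where
  disjoint_rows := by
    simp only [Set.PairwiseDisjoint, Set.Pairwise]
    decide +kernel
  disjoint_cols := by
    simp only [Set.PairwiseDisjoint, Set.Pairwise]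
    decide +kernel
  biUnion_eq := by decide +kernel
  meet := by decide +kernel

theorem card_of_mem_rowcol : ∀ L ∈ rowcol, L.card = 3 := by decide +kernel

theorem card_of_mem_bases_matP : ∀ B ∈ matP.bases, B.card = 3 := fun _ hB =>
  (Finset.mem_powersetCard.1 (Finset.mem_filter.1 hB).1).2

theorem mem_nonbases_matP {D : Finset (Fin 9 × Bool)} :
    D ∈ matP.nonbases 3 ↔ ∃ L ∈ rowcol, IsPositiveLift L D := by
  have hcard : D ∈ matP.nonbases 3 ↔
      D.card = 3 ∧ D.image Prod.fst ∈ rowcol ∧ ∏ x ∈ D, bsgn x.2 = 1 := by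
    rw [mem_nonbases]
    simp only [matP, Finset.subset_univ, Finset.mem_filter, Finset.mem_powersetCard, true_and]
    tauto
  rw [hcard]
  constructor
  · rintro ⟨hD, hline, hprod⟩
    exact ⟨_, hline, isPositiveLift_iff.2 ⟨rfl, hD.trans (card_of_mem_rowcol _ hline).symm, hprod⟩⟩
  · rintro ⟨L, hL, hLD⟩
    obtain ⟨rfl, hD, hprod⟩ := isPositiveLift_iff.1 hLD
    exact ⟨hD.trans (card_of_mem_rowcol _ hL), hL, hprod⟩

theorem nonbases_matN0 : matN0.nonbases 3 = gridRows := by decide +kernel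

theorem stmt8 :
    ¬ ∃ X : Finset (Fin 9 × Bool), X.card = 9 ∧ (matP.restrict X).Iso matN0 := by
  rintro ⟨X, -, φ, hφ⟩
  have mem_iff {D : Finset (Fin 9 × Bool)} : D ∈ (matP.restrict X).nonbases 3 ↔
      (∃ L ∈ gridRows ∪ gridCols, IsPositiveLift L D) ∧ D ⊆ X := by
    rw [mem_nonbases_restrict card_of_mem_bases_matP (Finset.subset_univ X), mem_nonbases_matP,
      gridRows_union_gridCols]
  have hcard : ((matP.restrict X).nonbases 3).card = 3 := by
    rw [(hφ.bijOn_nonbases 3).finsetCard_eq, nonbases_matN0]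
    rfl
  have hdisj : ((matP.restrict X).nonbases 3 : Set (Finset (Fin 9 × Bool))).PairwiseDisjoint id :=
    hφ.pairwiseDisjoint_nonbases (nonbases_matN0 ▸ isGrid_gridRows_gridCols.disjoint_rows)
  obtain ⟨D, hD, hsub, hlift⟩ := isGrid_gridRows_gridCols.hasExtraLift
    (by decide) (by decide) rfl rfl
    (fun L hL => card_of_mem_rowcol L (gridRows_union_gridCols ▸ hL) ▸ by decide)
    hcard hdisj fun A hA => (mem_iff.1 hA).1
  exact hD (mem_iff.2 ⟨hlift, hsub.trans (Finset.biUnion_subset.2 fun A hA => (mem_iff.1 hA).2)⟩)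

end MatroidGame
end

section
/- Let M and N be matroids with collections S_M ⊆ 2^{E(M)} and S_N ⊆ 2^{E(N)}, and suppose the isomorphism algebra 𝔄•(M,N,S) is nonzero. If a = (S_a,p_a) ∈ S•(M) and x = (S_x,p_x) ∈ S•(N) satisfy |S_a| ≠ |S_x|, then the image of the generator u_{ax} in 𝔄•(M,N,S) equals 0. -/
open scoped BigOperators TensorProduct

namespace MatroidGame

open PreMatroid

/-! Fix `(a, x)` and a property `p` of relation values, and multiply `u a x` by the sum of `u b y`
over the `b` with `p (rel a b)` and the `y` with `p (rel x y)`. The mismatch relations kill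
`u a x * u b y` as soon as exactly one of `b`, `y` satisfies its condition, so each partial row or
column sum can be completed to `1`. Summing by rows or by columns shows that `u a x` times the
number of such `b` equals `u a x` times the number of such `y`, so `u a x = 0` if these numbers
differ. For pointed sets the relation value is even (`0` or `2`) exactly when the underlying sets
agree, and with `p = Even` the two numbers are `|S_a|` and `|S_x|`. -/

section DoubleCounting

variable {I J R : Type*} [Fintype J] [NonAssocSemiring R]

theorem sum_mul_eq_of_sum_eq_one {e : R} {v : J → R} (t : Finset J) (hv : ∑ y, v y = 1)
    (ht : ∀ y ∉ t, e * v y = 0) : ∑ y ∈ t, e * v y = e := by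
  rw [Finset.sum_subset t.subset_univ fun y _ => ht y, ← Finset.mul_sum, hv, mul_one]

theorem card_nsmul_eq_card_nsmul_of_mul_eq_zero [Fintype I] {u : I → J → R}
    (hrow : ∀ b, ∑ y, u b y = 1) (hcol : ∀ y, ∑ b, u b y = 1) (e : R) {s : Finset I}
    {t : Finset J} (he : ∀ b y, ¬(b ∈ s ↔ y ∈ t) → e * u b y = 0) :
    s.card • e = t.card • e :=
  calc
    s.card • e = ∑ b ∈ s, ∑ y ∈ t, e * u b y := by
      rw [← Finset.sum_const]
      exact Finset.sum_congr rfl fun b hb =>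
        (sum_mul_eq_of_sum_eq_one t (hrow b) fun y hy => he b y fun hby => hy (hby.mp hb)).symm
    _ = ∑ y ∈ t, ∑ b ∈ s, e * u b y := Finset.sum_comm
    _ = t.card • e := by
      rw [← Finset.sum_const]
      exact Finset.sum_congr rfl fun y hy =>
        sum_mul_eq_of_sum_eq_one s (hcol y) fun b hb => he b y fun hby => hb (hby.mpr hy)

end DoubleCounting

section IsoAlgebra

variable {I J : Type*} [Fintype I] [Fintype J] {rI : I → I → ℕ} {rJ : J → J → ℕ}

theorem isoGen_mul_isoGen_eq_zero {a b : I} {x y : J} (h : rI a b ≠ rJ x y) :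
    isoGen I J rI rJ a x * isoGen I J rI rJ b y = 0 := by
  simpa only [isoGen, map_mul, map_zero] using RingQuot.mkAlgHom_rel ℂ (IsoRel.mismatch a b x y h)

theorem sum_isoGen_row (a : I) : ∑ x, isoGen I J rI rJ a x = 1 := by
  simpa only [isoGen, map_sum, map_one] using
    RingQuot.mkAlgHom_rel ℂ (IsoRel.magic (rI := rI) (rJ := rJ) (MagicRel.rowSum a))

theorem sum_isoGen_col (x : J) : ∑ a, isoGen I J rI rJ a x = 1 := by
  simpa only [isoGen, map_sum, map_one] using
    RingQuot.mkAlgHom_rel ℂ (IsoRel.magic (rI := rI) (rJ := rJ) (MagicRel.colSum x))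

theorem stmt9_general (p : ℕ → Prop) [DecidablePred p] {a : I} {x : J}
    (h : Finset.card {b | p (rI a b)} ≠ Finset.card {y | p (rJ x y)}) :
    isoGen I J rI rJ a x = 0 := by
  have hcount := card_nsmul_eq_card_nsmul_of_mul_eq_zero
    (sum_isoGen_row (rI := rI) (rJ := rJ)) sum_isoGen_col
    (isoGen I J rI rJ a x) (s := {b | p (rI a b)}) (t := {y | p (rJ x y)})
    fun b y hby => isoGen_mul_isoGen_eq_zero fun hr => hby (by simp [hr])
  by_contra hne
  rw [← Nat.cast_smul_eq_nsmul ℂ, ← Nat.cast_smul_eq_nsmul ℂ] at hcount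
  exact h (Nat.cast_injective (smul_left_injective ℂ hne hcount))

end IsoAlgebra

section PointedSets

variable {α : Type*} [DecidableEq α]

theorem even_relNum_iff (a b : Finset α × α) : Even (relNum a b) ↔ a.1 = b.1 := by
  unfold relNum
  split_ifs with hset <;> simp [hset, Nat.even_iff]

theorem card_filter_even_ptRel [Fintype α] {S : Finset (Finset α)} (a : PtSet S) :
    Finset.card {b | Even (ptRel S a b)} = a.val.1.card := by
  refine Finset.card_bij (fun b _ => b.val.2) ?_ ?_ ?_ <;>
    simp only [Finset.mem_filter_univ, even_relNum_iff]
  · intro b hb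
    exact hb ▸ b.2.2
  · intro b hb c hc hpoint
    exact Subtype.ext (Prod.ext (hb.symm.trans hc) hpoint)
  · intro q hq
    exact ⟨⟨(a.val.1, q), a.2.1, hq⟩, rfl, rfl⟩

end PointedSets

theorem stmt9 {α β : Type*} [Fintype α] [Fintype β] [DecidableEq α] [DecidableEq β]
    (M : PreMatroid α) (N : PreMatroid β) (hM : M.IsMatroid) (hN : N.IsMatroid)
    (S_M : Finset (Finset α)) (S_N : Finset (Finset β))
    (hSM : ∀ A ∈ S_M, A ⊆ M.E) (hSN : ∀ A ∈ S_N, A ⊆ N.E)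
    (hnz : Nontrivial (MatIsoAlgebra S_M S_N))
    (a : PtSet S_M) (x : PtSet S_N) (h : a.val.1.card ≠ x.val.1.card) :
    matGen S_M S_N a x = 0 :=
  stmt9_general Even (by rwa [card_filter_even_ptRel, card_filter_even_ptRel])

end MatroidGame
end

section
/- Let M and N be loopless matroids, and take S_M = B(M) and S_N = B(N) to be their collections of bases. If the isomorphism algebra 𝔄•(M,N,B) is nonzero, then rk(M) = rk(N) and |E(M)| = |E(N)|. -/
open scoped BigOperators TensorProduct

namespace MatroidGame

open PreMatroid

/-!
Only two features of the generators `u` of `𝔄•(M,N,B)` matter: their rows and columns sum to one,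
and `u a x * u b y = 0` unless `a`, `b` agree in the basis (resp. in the point) exactly when `x`,
`y` do. Counting the sum of all entries gives `|B•(M)| = |B•(N)|`. If `s` and `t` are the
two projections to bases, or the two projections to points, then for all `a` and `x`
`∑ {y | t y = t x}, u a y = ∑ {b | s b = s a}, u b x`,
because multiplying by `∑ b, u b x = 1` on the left side, and by `∑ y, u a y = 1` on the right side,
leaves the same nonzero products `u a y * u b x`. These sums thus depend only on `s a` and `t x`,
and form a smaller matrix whose rows and columns still sum to one. Counting again,
`|B(M)| = |B(N)|` in positive rank and, since there are no loops, `|E(M)| = |E(N)|`. The ranks agree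
because `|B•(M)| = |B(M)| * rk M`.
-/

/-- A matrix whose rows and columns all sum to one, abstracting the magic unitaries. The entries may
be noncommuting, and carry no positivity or idempotency condition. -/
structure IsBistochastic {I J A : Type*} [Fintype I] [Fintype J] [AddCommMonoid A] [One A]
    (u : I → J → A) : Prop where
  row_sum : ∀ a, ∑ x, u a x = 1
  col_sum : ∀ x, ∑ a, u a x = 1

/-- The matrix `u` preserves the partitions of its row and column indices into the fibers of `s` and
`t`: two entries have product zero when their rows share a fiber but their columns do not, or
vice versa. -/
def PreservesFibers {I J S T A : Type*} [Mul A] [Zero A] (u : I → J → A) (s : I → S) (t : J → T) :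
    Prop :=
  ∀ a b x y, ¬(s a = s b ↔ t x = t y) → u a x * u b y = 0

theorem IsBistochastic.card_eq {I J A : Type*} [Fintype I] [Fintype J] [AddCommMonoidWithOne A]
    [CharZero A] {u : I → J → A} (hu : IsBistochastic u) : Fintype.card I = Fintype.card J := by
  have entry_sum : ∑ a, ∑ x, u a x = ∑ x, ∑ a, u a x := Finset.sum_comm
  simpa [hu.row_sum, hu.col_sum] using entry_sum

section Fibers

variable {I J S T A : Type*} [Fintype I] [Fintype J] [NonAssocSemiring A] {u : I → J → A}
  {s : I → S} {t : J → T}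

theorem PreservesFibers.sum_row_fiber_eq_sum_col_fiber [DecidableEq S] [DecidableEq T]
    (h : PreservesFibers u s t) (hu : IsBistochastic u) (a : I) (x : J) :
    ∑ y with t y = t x, u a y = ∑ b with s b = s a, u b x := by
  have products_agree (y : J) (b : I) :
      (if t y = t x then u a y * u b x else 0) = if s b = s a then u a y * u b x else 0 := by
    by_cases hty : t y = t x <;> by_cases hsb : s b = s a
    · simp only [hty, hsb]
    · simp [hty, hsb, h a b y x (by simp [hty, Ne.symm hsb])]
    · simp [hty, hsb, h a b y x (by simp [hty, hsb])]
    · simp only [hty, hsb]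
  calc ∑ y with t y = t x, u a y
      = ∑ y with t y = t x, u a y * ∑ b, u b x := by simp only [hu.col_sum, mul_one]
    _ = ∑ y, ∑ b, if t y = t x then u a y * u b x else 0 := by
        simp only [Finset.sum_filter, Finset.mul_sum, Finset.sum_ite_irrel, Finset.sum_const_zero]
    _ = ∑ b, ∑ y, if s b = s a then u a y * u b x else 0 := by
        simp only [products_agree]
        exact Finset.sum_comm
    _ = ∑ b with s b = s a, (∑ y, u a y) * u b x := by
        simp only [Finset.sum_filter, Finset.sum_mul, Finset.sum_ite_irrel, Finset.sum_const_zero]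
    _ = ∑ b with s b = s a, u b x := by simp only [hu.row_sum, one_mul]

theorem PreservesFibers.isBistochastic_quotient [Fintype S] [Fintype T] [DecidableEq T]
    (h : PreservesFibers u s t) (hu : IsBistochastic u) {f : S → I}
    (hf : Function.RightInverse f s) (ht : Function.Surjective t) :
    IsBistochastic fun p q => ∑ y with t y = q, u (f p) y where
  row_sum p := (Finset.sum_fiberwise _ t _).trans (hu.row_sum (f p))
  col_sum q := by
    classical
    obtain ⟨x, rfl⟩ := ht q
    simp only [h.sum_row_fiber_eq_sum_col_fiber hu, hf _]
    exact (Finset.sum_fiberwise _ s _).trans (hu.col_sum x)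

theorem PreservesFibers.ncard_range_eq [CharZero A] (h : PreservesFibers u s t)
    (hu : IsBistochastic u) : (Set.range s).ncard = (Set.range t).ncard := by
  classical
  have : Fintype (Set.range s) := Fintype.ofFinite _
  have : Fintype (Set.range t) := Fintype.ofFinite _
  have h' : PreservesFibers u (Set.rangeFactorization s) (Set.rangeFactorization t) := by
    simpa only [PreservesFibers, Subtype.ext_iff, Set.rangeFactorization_coe] using h
  have card_eq := (h'.isBistochastic_quotient hu
    (Function.rightInverse_surjInv Set.rangeFactorization_surjective)
    Set.rangeFactorization_surjective).card_eq
  rwa [Fintype.card_eq_nat_card, Fintype.card_eq_nat_card, Nat.card_coe_set_eq,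
    Nat.card_coe_set_eq] at card_eq

end Fibers

section IsoAlgebra

variable {I J : Type*} [Fintype I] [Fintype J] {rI : I → I → ℕ} {rJ : J → J → ℕ}

theorem isBistochastic_isoGen : IsBistochastic (isoGen I J rI rJ) where
  row_sum a := by
    simpa [isoGen] using RingQuot.mkAlgHom_rel ℂ (IsoRel.magic (rI := rI) (rJ := rJ) (.rowSum a))
  col_sum x := by
    simpa [isoGen] using RingQuot.mkAlgHom_rel ℂ (IsoRel.magic (rI := rI) (rJ := rJ) (.colSum x))

end IsoAlgebra

theorem relNum_eq_relNum_iff {α β : Type*} [DecidableEq α] [DecidableEq β] {a b : Finset α × α}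
    {x y : Finset β × β} :
    relNum a b = relNum x y ↔ (a.1 = b.1 ↔ x.1 = y.1) ∧ (a.2 = b.2 ↔ x.2 = y.2) := by
  unfold relNum
  split_ifs <;> simp_all

section PointedSets

variable {α : Type*}

theorem card_ptSet [Fintype α] [DecidableEq α] (S : Finset (Finset α)) :
    Fintype.card (PtSet S) = ∑ A ∈ S, A.card := by
  let e : PtSet S ≃ Σ A : S, (A : Finset α) :=
    { toFun v := ⟨⟨v.1.1, v.2.1⟩, v.1.2, v.2.2⟩
      invFun v := ⟨(v.1, v.2), v.1.2, v.2.2⟩ }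
  rw [Fintype.card_congr e, Fintype.card_sigma]
  simpa only [Fintype.card_coe] using Finset.sum_coe_sort S Finset.card

theorem range_ptSet_point [DecidableEq α] (S : Finset (Finset α)) :
    Set.range (fun v : PtSet S => v.1.2) = S.biUnion id := by
  ext p
  simp

theorem range_ptSet_set {S : Finset (Finset α)} (hS : ∅ ∉ S) :
    Set.range (fun v : PtSet S => v.1.1) = S := by
  ext A
  have nonempty_of_mem (hA : A ∈ S) : ∃ p, p ∈ A :=
    Finset.nonempty_iff_ne_empty.2 (ne_of_mem_of_not_mem hA hS)
  simpa using nonempty_of_mem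

end PointedSets

section MatIsoAlgebra

variable {α β : Type*} [Fintype α] [Fintype β] [DecidableEq α] [DecidableEq β]
  {S : Finset (Finset α)} {T : Finset (Finset β)}

theorem isBistochastic_matGen : IsBistochastic (matGen S T) :=
  isBistochastic_isoGen

theorem preservesFibers_matGen_set :
    PreservesFibers (matGen S T) (fun v => v.1.1) (fun v => v.1.1) :=
  fun _ _ _ _ h => isoGen_mul_isoGen_eq_zero fun hrel => h (relNum_eq_relNum_iff.1 hrel).1

theorem preservesFibers_matGen_point :
    PreservesFibers (matGen S T) (fun v => v.1.2) (fun v => v.1.2) :=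
  fun _ _ _ _ h => isoGen_mul_isoGen_eq_zero fun hrel => h (relNum_eq_relNum_iff.1 hrel).2

variable [Nontrivial (MatIsoAlgebra S T)]

instance : CharZero (MatIsoAlgebra S T) :=
  charZero_of_injective_algebraMap (algebraMap ℂ (MatIsoAlgebra S T)).injective

variable (S T)

theorem sum_card_eq_sum_card_of_nontrivial : ∑ A ∈ S, A.card = ∑ B ∈ T, B.card := by
  simpa only [card_ptSet] using (isBistochastic_matGen (S := S) (T := T)).card_eq

theorem card_biUnion_eq_of_nontrivial : (S.biUnion id).card = (T.biUnion id).card := by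
  simpa only [range_ptSet_point, Set.ncard_coe_finset] using
    (preservesFibers_matGen_point (S := S) (T := T)).ncard_range_eq isBistochastic_matGen

variable {S T}

theorem card_eq_of_nontrivial (hS : ∅ ∉ S) (hT : ∅ ∉ T) : S.card = T.card := by
  simpa only [range_ptSet_set hS, range_ptSet_set hT, Set.ncard_coe_finset] using
    (preservesFibers_matGen_set (S := S) (T := T)).ncard_range_eq isBistochastic_matGen

theorem eq_of_sized_of_nontrivial {m n : ℕ} (hS : S.Nonempty) (hT : T.Nonempty)
    (hSm : (S : Set (Finset α)).Sized m) (hTn : (T : Set (Finset β)).Sized n) : m = n := by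
  have incidences : S.card * m = T.card * n := by
    simpa only [Finset.sum_const_nat hSm, Finset.sum_const_nat hTn] using
      sum_card_eq_sum_card_of_nontrivial S T
  have zero_iff : m = 0 ↔ n = 0 := by
    simpa [hS.ne_empty, hT.ne_empty] using congrArg (· = 0) incidences
  by_cases hm : m = 0
  · rw [hm, zero_iff.1 hm]
  · have hn : n ≠ 0 := mt zero_iff.2 hm
    have card_eq : S.card = T.card :=
      card_eq_of_nontrivial (fun h => hm (hSm h).symm) (fun h => hn (hTn h).symm)
    exact Nat.eq_of_mul_eq_mul_left hT.card_pos (card_eq ▸ incidences)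

end MatIsoAlgebra

namespace PreMatroid.IsMatroid

variable {α : Type*} [DecidableEq α] {M : PreMatroid α}

theorem sized_bases (hM : M.IsMatroid) : (M.bases : Set (Finset α)).Sized M.rk := by
  obtain ⟨-, subset_ground, card_eq, -⟩ := hM
  intro B hB
  apply le_antisymm
  · exact Finset.le_sup (f := Finset.card) <| Finset.mem_filter.2
      ⟨Finset.mem_powerset.2 (subset_ground B hB), B, hB, subset_rfl⟩
  · refine Finset.sup_le fun I hI => ?_
    obtain ⟨B', hB', hIB'⟩ := (Finset.mem_filter.1 hI).2
    exact (Finset.card_le_card hIB').trans_eq (card_eq B' hB' B hB)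

theorem biUnion_bases (hM : M.IsMatroid) (hL : M.Loopless) : M.bases.biUnion id = M.E := by
  refine (Finset.biUnion_subset.2 hM.2.1).antisymm fun p hp => ?_
  by_contra hcov
  exact hL p ⟨hp, fun B hB hpB => hcov (Finset.mem_biUnion.2 ⟨B, hB, hpB⟩)⟩

end PreMatroid.IsMatroid

theorem stmt11_general {α β : Type*} [Fintype α] [Fintype β] [DecidableEq α] [DecidableEq β]
    {S : Finset (Finset α)} {T : Finset (Finset β)} {m n : ℕ} (hS : S.Nonempty) (hT : T.Nonempty)
    (hSm : (S : Set (Finset α)).Sized m) (hTn : (T : Set (Finset β)).Sized n)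
    [Nontrivial (MatIsoAlgebra S T)] :
    m = n ∧ (S.biUnion id).card = (T.biUnion id).card :=
  ⟨eq_of_sized_of_nontrivial hS hT hSm hTn, card_biUnion_eq_of_nontrivial S T⟩

theorem stmt11 {α β : Type*} [Fintype α] [Fintype β] [DecidableEq α] [DecidableEq β]
    (M : PreMatroid α) (N : PreMatroid β) (hM : M.IsMatroid) (hN : N.IsMatroid)
    (hLM : M.Loopless) (hLN : N.Loopless)
    (hnz : Nontrivial (MatIsoAlgebra M.bases N.bases)) :
    M.rk = N.rk ∧ M.E.card = N.E.card := by
  rw [← hM.biUnion_bases hLM, ← hN.biUnion_bases hLN]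
  exact stmt11_general hM.1 hN.1 hM.sized_bases hN.sized_bases

end MatroidGame
end
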